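/- For every m ≥ 3, the vector space X_m of formal linear combinations Σ α_{i,j} A_iB_j (A_i ranging over set partitions of the m marked vertices into m−1 parts, B_j over set partitions into 2 parts) that evaluate to zero as spanning forest polynomials on every graph with m marked vertices has dimension exactly m(m−2); moreover there exists at least one identity Φ_{(1,1,...,1)}Φ_{(1,2,...,m)} = Σ α_{i,j} A_iB_j valid on all graphs, so the most general such identity has m(m−2) free parameters. -/

import Mathlib

open Finset

/-- A finite edge set `F` is a spanning forest of `G` compatible with the set partition of
(a subset of) the marked vertices `v : Fin m → V` encoded by `p : Fin m → Option ℕ`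
(`p i = none` means vertex `i` is unconstrained, `p i = some ℓ` means vertex `i` lies in
the part labelled `ℓ`): the edges of `F` lie in `G`, `F` is acyclic, two constrained
marked vertices lie in the same tree iff they have the same label, and every vertex of
the graph lies in the tree of some constrained marked vertex (so the trees of the forest
are in bijection with the parts of the partition). -/
def IsCompatibleForest {V : Type*} [Fintype V] [DecidableEq V] (G : SimpleGraph V) {m : ℕ}
    (v : Fin m → V) (p : Fin m → Option ℕ) (F : Finset (Sym2 V)) : Prop :=
  (F : Set (Sym2 V)) ⊆ G.edgeSet ∧
  (SimpleGraph.fromEdgeSet (F : Set (Sym2 V))).IsAcyclic ∧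
  (∀ i j : Fin m, p i ≠ none → p j ≠ none →
    ((SimpleGraph.fromEdgeSet (F : Set (Sym2 V))).Reachable (v i) (v j) ↔ p i = p j)) ∧
  (∀ w : V, ∃ i : Fin m, p i ≠ none ∧
    (SimpleGraph.fromEdgeSet (F : Set (Sym2 V))).Reachable w (v i))

/-- The spanning forest polynomial `Φ_P = Σ_{F ∼ P} Π_{e ∉ F} x_e` of the graph `G` with
edge variables `x`, marked vertices `v`, and partition `P` encoded by `p`. -/
noncomputable def forestPoly {V : Type*} [Fintype V] [DecidableEq V] {R : Type*}
    [CommRing R] (G : SimpleGraph V) [DecidableRel G.Adj] (x : Sym2 V → R) {m : ℕ}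
    (v : Fin m → V) (p : Fin m → Option ℕ) : R :=
  ∑ F ∈ G.edgeFinset.powerset,
    (letI := Classical.dec (IsCompatibleForest G v p F)
     if IsCompatibleForest G v p F then ∏ e ∈ G.edgeFinset \ F, x e else 0)

/-- The `(m−1)`-part partitions of the `m` marked vertices, indexed by their unique part
of size two. -/
def AIdx (m : ℕ) := {s : Finset (Fin m) // s.card = 2}

/-- The 2-part partitions of the `m` marked vertices, indexed by the part containing the
first marked vertex (a proper subset containing vertex `0`). -/
def BIdx (m : ℕ) := {S : Finset (Fin m) // (∃ i ∈ S, (i : ℕ) = 0) ∧ S ≠ Finset.univ}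

instance (m : ℕ) : Fintype (AIdx m) := Subtype.fintype _
instance (m : ℕ) : Fintype (BIdx m) := Subtype.fintype _

/-- The partition with the two vertices of `s` in one part and all other vertices
singletons, encoded with labels. -/
def partA {m : ℕ} (s : Finset (Fin m)) : Fin m → Option ℕ :=
  fun i => if i ∈ s then some m else some (i : ℕ)

/-- The 2-part partition with parts `S` and its complement, encoded with labels. -/
def partB {m : ℕ} (S : Finset (Fin m)) : Fin m → Option ℕ :=
  fun i => if i ∈ S then some 0 else some 1

/-- `α ∈ X_m`: the formal combination `Σ α_{ij} A_iB_j` evaluates to zero as spanning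
forest polynomials on every graph with `m` distinct marked vertices and every assignment
of values to the edge variables. -/
def MemX (m : ℕ) (α : AIdx m × BIdx m → ℚ) : Prop :=
  ∀ (V : Type) [Fintype V] [DecidableEq V] (G : SimpleGraph V) [DecidableRel G.Adj]
    (x : Sym2 V → ℚ) (v : Fin m → V), Function.Injective v →
    ∑ q : AIdx m × BIdx m, α q *
      (forestPoly G x v (partA q.1.val) * forestPoly G x v (partB q.2.val)) = 0

set_option linter.unusedSectionVars false
set_option linter.unusedVariables false

section ForestBasics
variable {V : Type*} [DecidableEq V]

/-- Reachability in the graph with edge set `F`. -/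
def FR (F : Finset (Sym2 V)) (a b : V) : Prop :=
  (SimpleGraph.fromEdgeSet (F : Set (Sym2 V))).Reachable a b

/-- Acyclicity of the graph with edge set `F`. -/
def FA (F : Finset (Sym2 V)) : Prop :=
  (SimpleGraph.fromEdgeSet (F : Set (Sym2 V))).IsAcyclic

lemma FR.refl (F : Finset (Sym2 V)) (a : V) : FR F a a := SimpleGraph.Reachable.refl a
lemma FR.symm {F : Finset (Sym2 V)} {a b : V} (h : FR F a b) : FR F b a :=
  SimpleGraph.Reachable.symm h
lemma FR.trans {F : Finset (Sym2 V)} {a b c : V} (h : FR F a b) (h' : FR F b c) : FR F a c :=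
  SimpleGraph.Reachable.trans h h'
lemma FR.mono {F F' : Finset (Sym2 V)} (hF : F ⊆ F') {a b : V} (h : FR F a b) : FR F' a b :=
  SimpleGraph.Reachable.mono (SimpleGraph.fromEdgeSet_mono (by exact_mod_cast hF)) h
lemma FR.edge {F : Finset (Sym2 V)} {a b : V} (h : s(a, b) ∈ F) : FR F a b := by
  by_cases hab : a = b
  · subst hab; exact FR.refl _ _
  · exact SimpleGraph.Adj.reachable (by simp [h, hab])
lemma FA.anti {F F' : Finset (Sym2 V)} (hF : F ⊆ F') (h : FA F') : FA F :=
  SimpleGraph.IsAcyclic.anti (SimpleGraph.fromEdgeSet_mono (by exact_mod_cast hF)) h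

/-- A property preserved along edges is preserved along reachability. -/
lemma FR.cut {F : Finset (Sym2 V)} {P : V → Prop}
    (hP : ∀ a b, s(a, b) ∈ F → P a → P b) {a b : V} (h : FR F a b) (ha : P a) : P b := by
  obtain ⟨w⟩ := h
  induction w with
  | nil => exact ha
  | cons hadj _ ih =>
    apply ih
    simp at hadj
    exact hP _ _ hadj.1 ha

lemma FR_insert {F : Finset (Sym2 V)} {w u a b : V} :
    FR (insert s(w, u) F) a b ↔ FR F a b ∨ (FR F a w ∧ FR F u b) ∨ (FR F a u ∧ FR F w b) := by
  constructor
  · intro h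
    refine FR.cut (P := fun b => FR F a b ∨ (FR F a w ∧ FR F u b) ∨ (FR F a u ∧ FR F w b))
      ?_ h (Or.inl (FR.refl _ _))
    intro x y hxy hx
    rw [Finset.mem_insert] at hxy
    rcases hxy with hxy | hxy
    · rw [Sym2.eq_iff] at hxy
      rcases hxy with ⟨rfl, rfl⟩ | ⟨rfl, rfl⟩
      · rcases hx with h | ⟨h, h'⟩ | ⟨h, h'⟩
        · exact Or.inr (Or.inl ⟨h, FR.refl _ _⟩)
        · exact Or.inr (Or.inl ⟨h, FR.refl _ _⟩)
        · exact Or.inl h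
      · rcases hx with h | ⟨h, h'⟩ | ⟨h, h'⟩
        · exact Or.inr (Or.inr ⟨h, FR.refl _ _⟩)
        · exact Or.inl h
        · exact Or.inr (Or.inr ⟨h, FR.refl _ _⟩)
    · have := FR.edge hxy
      rcases hx with h | ⟨h, h'⟩ | ⟨h, h'⟩
      · exact Or.inl (h.trans this)
      · exact Or.inr (Or.inl ⟨h, h'.trans this⟩)
      · exact Or.inr (Or.inr ⟨h, h'.trans this⟩)
  · have hs : F ⊆ insert s(w, u) F := Finset.subset_insert _ _
    have he : FR (insert s(w, u) F) w u := FR.edge (Finset.mem_insert_self _ _)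
    rintro (h | ⟨h, h'⟩ | ⟨h, h'⟩)
    · exact h.mono hs
    · exact ((h.mono hs).trans he).trans (h'.mono hs)
    · exact ((h.mono hs).trans he.symm).trans (h'.mono hs)

lemma FA_insert {F : Finset (Sym2 V)} {w u : V} (hF : FA F) (h : ¬ FR F w u) :
    FA (insert s(w, u) F) := by
  have := SimpleGraph.IsAcyclic.sup_edge_of_not_reachable h hF
  unfold FA
  convert! this using 1
  rw [SimpleGraph.edge, Finset.coe_insert, Set.insert_eq, sup_comm, SimpleGraph.fromEdgeSet_union]

lemma FA.not_FR_erase {F : Finset (Sym2 V)} {w u : V} (hF : FA F) (h : s(w, u) ∈ F)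
    (hwu : w ≠ u) : ¬ FR (F.erase s(w, u)) w u := by
  have := (SimpleGraph.isAcyclic_iff_forall_adj_isBridge.1 hF) (v := w) (w := u) (by simp [h, hwu])
  rw [SimpleGraph.isBridge_iff] at this
  intro h2
  apply this
  refine SimpleGraph.Reachable.mono ?_ h2
  intro a b hab
  simp at hab ⊢
  tauto

/-- Forests with edges in `E` whose components correspond to the roots `M`. -/
def Rooted (E : Finset (Sym2 V)) (M : Finset V) (F : Finset (Sym2 V)) : Prop :=
  F ⊆ E ∧ FA F ∧ (∀ a ∈ M, ∀ b ∈ M, FR F a b → a = b) ∧ ∀ w, ∃ a ∈ M, FR F w a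

lemma Rooted.insert_edge {E : Finset (Sym2 V)} {M : Finset V} {F : Finset (Sym2 V)} {w u : V}
    (hw : w ∉ M) (h : Rooted E (insert w M) F) (he : s(w, u) ∈ E) (hu : ¬ FR F w u) :
    Rooted E M (insert s(w, u) F) := by
  obtain ⟨h1, h2, h3, h4⟩ := h
  refine ⟨Finset.insert_subset he h1, FA_insert h2 hu, ?_, ?_⟩
  · intro a ha b hb hab
    have ha' := Finset.mem_insert_of_mem (a := a) (b := w) ha
    have hb' := Finset.mem_insert_of_mem (a := b) (b := w) hb
    have hw' := Finset.mem_insert_self w M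
    rcases FR_insert.1 hab with h | ⟨h, h'⟩ | ⟨h, h'⟩
    · exact h3 a ha' b hb' h
    · exact absurd (h3 a ha' w hw' h ▸ ha) hw
    · exact absurd (h3 w hw' b hb' h' ▸ hb) hw
  · intro x
    have hs : F ⊆ insert s(w, u) F := Finset.subset_insert _ _
    have he : FR (insert s(w, u) F) w u := FR.edge (Finset.mem_insert_self _ _)
    obtain ⟨a, ha, hxa⟩ := h4 x
    rcases Finset.mem_insert.1 ha with rfl | ha
    · obtain ⟨b, hb, hub⟩ := h4 u
      rcases Finset.mem_insert.1 hb with rfl | hb'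
      · exact absurd hub.symm hu
      · exact ⟨b, hb', ((hxa.mono hs).trans he).trans (hub.mono hs)⟩
    · exact ⟨a, ha, hxa.mono hs⟩

lemma exists_first_edge {F : Finset (Sym2 V)} {w k : V} (h : FR F w k) (hwk : w ≠ k) :
    ∃ u, w ≠ u ∧ s(w, u) ∈ F ∧ FR (F.erase s(w, u)) u k := by
  obtain ⟨p, hp⟩ := SimpleGraph.Reachable.exists_isPath h
  cases p with
  | nil => exact absurd rfl hwk
  | @cons _ u _ hadj q =>
    simp at hadj
    refine ⟨u, hadj.2, hadj.1, ?_⟩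
    rw [SimpleGraph.Walk.cons_isPath_iff] at hp
    refine ⟨q.transfer _ ?_⟩
    intro e he
    have h1 := q.edges_subset_edgeSet he
    have h2 : e ≠ s(w, u) := by
      rintro rfl
      exact hp.2 (q.fst_mem_support_of_mem_edges he)
    simp at h1 ⊢
    tauto

lemma Rooted.exists_erase {E : Finset (Sym2 V)} {M : Finset V} {F : Finset (Sym2 V)} {w : V}
    (hw : w ∉ M) (h : Rooted E M F) :
    ∃ u, w ≠ u ∧ s(w, u) ∈ F ∧ Rooted E (insert w M) (F.erase s(w, u)) := by
  obtain ⟨h1, h2, h3, h4⟩ := h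
  obtain ⟨k, hk, hwk⟩ := h4 w
  obtain ⟨u, hwu, huF, huk⟩ := exists_first_edge hwk (by rintro rfl; exact hw hk)
  have hs : F.erase s(w, u) ⊆ F := Finset.erase_subset _ _
  have hbr := h2.not_FR_erase huF hwu
  have key : ∀ b ∈ M, ¬ FR (F.erase s(w, u)) w b := by
    intro b hb hwb
    have := h3 k hk b hb (hwk.symm.trans (hwb.mono hs))
    subst this
    exact hbr (hwb.trans huk.symm)
  refine ⟨u, hwu, huF, hs.trans h1, h2.anti hs, ?_, ?_⟩
  · intro a ha b hb hab
    rcases Finset.mem_insert.1 ha with rfl | ha' <;> rcases Finset.mem_insert.1 hb with rfl | hb'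
    · rfl
    · exact absurd hab (key _ hb')
    · exact absurd hab.symm (key _ ha')
    · exact h3 a ha' b hb' (hab.mono hs)
  · intro x
    obtain ⟨a, ha, hxa⟩ := h4 x
    rw [← Finset.insert_erase huF] at hxa
    rcases FR_insert.1 hxa with h | ⟨h, h'⟩ | ⟨h, h'⟩
    · exact ⟨a, Finset.mem_insert_of_mem ha, h⟩
    · exact ⟨w, Finset.mem_insert_self _ _, h⟩
    · exact ⟨k, Finset.mem_insert_of_mem hk, h.trans huk⟩

lemma Rooted.erase_unique {E : Finset (Sym2 V)} {M : Finset V} {F : Finset (Sym2 V)} {w u u' : V}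
    (hw : w ∉ M) (h : Rooted E M F) (hwu : w ≠ u) (hwu' : w ≠ u')
    (hu : s(w, u) ∈ F) (hu' : s(w, u') ∈ F)
    (hr : Rooted E (insert w M) (F.erase s(w, u)))
    (hr' : Rooted E (insert w M) (F.erase s(w, u'))) : u = u' := by
  by_contra hne
  obtain ⟨h1, h2, h3, h4⟩ := h
  obtain ⟨k, hk, hwk⟩ := h4 w
  have nk : ¬ FR (F.erase s(w, u)) w k := fun hh =>
    hw ((hr.2.2.1 w (Finset.mem_insert_self _ _) k (Finset.mem_insert_of_mem hk) hh) ▸ hk)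
  have nk' : ¬ FR (F.erase s(w, u')) w k := fun hh =>
    hw ((hr'.2.2.1 w (Finset.mem_insert_self _ _) k (Finset.mem_insert_of_mem hk) hh) ▸ hk)
  have hee : s(w, u) ≠ s(w, u') := by
    intro h
    rw [Sym2.eq_iff] at h
    rcases h with ⟨_, h⟩ | ⟨h, h'⟩
    · exact hne h
    · exact hwu' h
  have hmem : s(w, u') ∈ F.erase s(w, u) := Finset.mem_erase.2 ⟨hee.symm, hu'⟩
  have hmem' : s(w, u) ∈ F.erase s(w, u') := Finset.mem_erase.2 ⟨hee, hu⟩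
  have huk' : FR (F.erase s(w, u')) u' k := by
    rw [← Finset.insert_erase hu'] at hwk
    rcases FR_insert.1 hwk with h | ⟨h, h'⟩ | ⟨h, h'⟩
    · exact absurd h nk'
    · exact h'
    · exact absurd h' nk'
  rw [← Finset.insert_erase hmem'] at huk'
  have hsub : (F.erase s(w, u')).erase s(w, u) ⊆ F.erase s(w, u) :=
    Finset.erase_subset_erase _ (Finset.erase_subset _ _)
  have hsub' : (F.erase s(w, u')).erase s(w, u) ⊆ F.erase s(w, u') := Finset.erase_subset _ _
  rcases FR_insert.1 huk' with h | ⟨h, h'⟩ | ⟨h, h'⟩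
  · exact nk ((FR.edge hmem).trans (h.mono hsub))
  · exact h2.not_FR_erase hu' hwu' (h.symm.mono hsub')
  · exact nk (h'.mono hsub)

end ForestBasics

set_option linter.unusedSectionVars false
set_option linter.unusedVariables false

section ForestSums
open scoped Classical
variable {V : Type*} [Fintype V] [DecidableEq V] {K : Type*} [Field K]

/-- The finite set of forests rooted at `M`. -/
noncomputable def RF (E : Finset (Sym2 V)) (M : Finset V) : Finset (Finset (Sym2 V)) :=
  E.powerset.filter (fun F => Rooted E M F)

lemma mem_RF {E : Finset (Sym2 V)} {M : Finset V} {F : Finset (Sym2 V)} :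
    F ∈ RF E M ↔ Rooted E M F := by
  simp only [RF, Finset.mem_filter, Finset.mem_powerset]
  exact ⟨fun h => h.2, fun h => ⟨h.1, h⟩⟩

/-- The weight of a forest. -/
def wt (E : Finset (Sym2 V)) (x : Sym2 V → K) (F : Finset (Sym2 V)) : K :=
  ∏ e ∈ E \ F, x e

/-- The conductance. -/
noncomputable def yy (E : Finset (Sym2 V)) (x : Sym2 V → K) (w u : V) : K :=
  if s(w, u) ∈ E then (x s(w, u))⁻¹ else 0

lemma yy_comm (E : Finset (Sym2 V)) (x : Sym2 V → K) (w u : V) : yy E x w u = yy E x u w := by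
  unfold yy
  rw [Sym2.eq_swap]

lemma wt_insert {E : Finset (Sym2 V)} {x : Sym2 V → K} (hx : ∀ e ∈ E, x e ≠ 0)
    {F : Finset (Sym2 V)} {e : Sym2 V} (he : e ∈ E) (heF : e ∉ F) :
    wt E x (insert e F) = (x e)⁻¹ * wt E x F := by
  unfold wt
  have h : E \ F = insert e (E \ insert e F) := by
    ext a
    simp only [Finset.mem_sdiff, Finset.mem_insert]
    by_cases h : a = e
    · subst h; simp [he, heF]
    · simp [h]
  rw [h, Finset.prod_insert (by simp), ← mul_assoc, inv_mul_cancel₀ (hx e he), one_mul]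

lemma sum_RF_eq {E : Finset (Sym2 V)} {x : Sym2 V → K} (hx : ∀ e ∈ E, x e ≠ 0)
    (hE : ∀ u, s(u, u) ∉ E) {M : Finset V} {w : V} (hw : w ∉ M) (φ : Finset (Sym2 V) → K) :
    ∑ F ∈ RF E M, wt E x F * φ F =
      ∑ F ∈ RF E (insert w M), wt E x F *
        ∑ u, yy E x w u * (if FR F w u then 0 else φ (insert s(w, u) F)) := by
  have hne : ∀ u, s(w, u) ∈ E → w ≠ u := by
    rintro u hu rfl
    exact hE _ hu
  have h1 : ∀ F ∈ RF E (insert w M), wt E x F *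
        ∑ u, yy E x w u * (if FR F w u then 0 else φ (insert s(w, u) F)) =
      ∑ u ∈ univ.filter (fun u => s(w, u) ∈ E ∧ ¬ FR F w u),
        wt E x (insert s(w, u) F) * φ (insert s(w, u) F) := by
    intro F hF
    rw [Finset.mul_sum, Finset.sum_filter]
    refine Finset.sum_congr rfl fun u _ => ?_
    by_cases h1 : s(w, u) ∈ E
    · by_cases h2 : FR F w u
      · simp [h2]
      · have h3 : s(w, u) ∉ F := fun h => h2 (FR.edge h)
        rw [if_neg h2, if_pos ⟨h1, h2⟩, wt_insert hx h1 h3, yy, if_pos h1]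
        ring
    · simp [yy, h1]
  rw [Finset.sum_congr rfl h1, Finset.sum_sigma']
  symm
  refine Finset.sum_bij (fun p _ => insert s(w, p.2) p.1) ?_ ?_ ?_ ?_
  · rintro ⟨F, u⟩ h
    simp only [Finset.mem_sigma, mem_RF, Finset.mem_filter, Finset.mem_univ, true_and] at h ⊢
    exact h.1.insert_edge hw h.2.1 h.2.2
  · rintro ⟨F, u⟩ h ⟨F', u'⟩ h' heq
    simp only [Finset.mem_sigma, mem_RF, Finset.mem_filter, Finset.mem_univ, true_and] at h h' heq
    have n1 : s(w, u) ∉ F := fun h0 => h.2.2 (FR.edge h0)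
    have n2 : s(w, u') ∉ F' := fun h0 => h'.2.2 (FR.edge h0)
    have e1 : (insert s(w, u) F).erase s(w, u) = F := Finset.erase_insert n1
    have e2 : (insert s(w, u) F).erase s(w, u') = F' := by rw [heq]; exact Finset.erase_insert n2
    have huu : u = u' := by
      refine Rooted.erase_unique hw (h.1.insert_edge hw h.2.1 h.2.2) (hne _ h.2.1) (hne _ h'.2.1)
        (Finset.mem_insert_self _ _) (heq ▸ Finset.mem_insert_self _ _) ?_ ?_
      · rw [e1]; exact h.1
      · rw [e2]; exact h'.1
    subst huu
    rw [e1] at e2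
    subst e2
    rfl
  · intro F hF
    rw [mem_RF] at hF
    obtain ⟨u, h1, h2, h3⟩ := hF.exists_erase hw
    refine ⟨⟨F.erase s(w, u), u⟩, ?_, Finset.insert_erase h2⟩
    simp only [Finset.mem_sigma, mem_RF, Finset.mem_filter, Finset.mem_univ, true_and]
    exact ⟨h3, hF.1 h2, hF.2.1.not_FR_erase h2 h1⟩
  · intro _ _
    rfl

/-- Weighted count of forests rooted at `M` with `z` in the tree of `j`. -/
noncomputable def HH (E : Finset (Sym2 V)) (x : Sym2 V → K) (M : Finset V) (j z : V) : K :=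
  ∑ F ∈ RF E M, wt E x F * (if FR F z j then 1 else 0)

lemma HH_formula {E : Finset (Sym2 V)} {x : Sym2 V → K} (hx : ∀ e ∈ E, x e ≠ 0)
    (hE : ∀ u, s(u, u) ∉ E) {M : Finset V} {w j : V} (hw : w ∉ M) (hj : j ∈ M) (z : V) :
    HH E x M j z = ∑ F ∈ RF E (insert w M), wt E x F *
      ∑ u, yy E x w u * ((1 - if FR F w u then 1 else 0) * (if FR F z j then 1 else 0)
        + (if FR F w z then 1 else 0) * (if FR F u j then 1 else 0)) := by
  unfold HH
  rw [sum_RF_eq hx hE hw]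
  refine Finset.sum_congr rfl fun F hF => ?_
  congr 1
  refine Finset.sum_congr rfl fun u _ => ?_
  congr 1
  rw [mem_RF] at hF
  have nwj : ¬ FR F w j := fun h => hw
    ((hF.2.2.1 w (Finset.mem_insert_self _ _) j (Finset.mem_insert_of_mem hj) h) ▸ hj)
  by_cases h1 : FR F w u
  · have h2 : ¬ FR F u j := fun h => nwj (h1.trans h)
    simp [h1, h2]
  · by_cases h3 : FR F z j
    · have h4 : ¬ FR F w z := fun h => nwj (h.trans h3)
      have h5 : FR (insert s(w, u) F) z j := h3.mono (Finset.subset_insert _ _)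
      simp [h1, h3, h4, h5]
    · by_cases h4 : FR F w z ∧ FR F u j
      · have h5 : FR (insert s(w, u) F) z j := FR_insert.2 (Or.inr (Or.inl ⟨h4.1.symm, h4.2⟩))
        simp [h1, h3, h4, h5]
      · have h5 : ¬ FR (insert s(w, u) F) z j := by
          intro h
          rcases FR_insert.1 h with h | ⟨h, h'⟩ | ⟨h, h'⟩
          · exact h3 h
          · exact h4 ⟨h.symm, h'⟩
          · exact nwj h'
        simp only [h1, h3, h5, if_false]
        by_cases h6 : FR F w z
        · have h7 : ¬ FR F u j := fun h => h4 ⟨h6, h⟩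
          simp [h7]
        · simp [h6]

lemma HH_self (E : Finset (Sym2 V)) (x : Sym2 V → K) (M : Finset V) (j : V) :
    HH E x M j j = ∑ F ∈ RF E M, wt E x F := by
  unfold HH
  exact Finset.sum_congr rfl fun F _ => by simp [FR.refl]

lemma HH_other (E : Finset (Sym2 V)) (x : Sym2 V → K) {M : Finset V} {j c : V} (hj : j ∈ M)
    (hc : c ∈ M) (hjc : j ≠ c) : HH E x M j c = 0 := by
  unfold HH
  refine Finset.sum_eq_zero fun F hF => ?_
  rw [mem_RF] at hF
  have : ¬ FR F c j := fun h => hjc (hF.2.2.1 c hc j hj h).symm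
  simp [this]

/-- The weighted Laplacian. -/
noncomputable def Lap (E : Finset (Sym2 V)) (x : Sym2 V → K) (f : V → K) (w : V) : K :=
  ∑ u, yy E x w u * (f w - f u)

lemma Lap_symm (E : Finset (Sym2 V)) (x : Sym2 V → K) (f g : V → K) :
    ∑ w, f w * Lap E x g w = ∑ w, g w * Lap E x f w := by
  have key : ∀ f g : V → K, ∑ w, f w * Lap E x g w =
      ∑ w, ∑ u, yy E x w u * (f w * g w) - ∑ w, ∑ u, yy E x w u * (f w * g u) := by
    intro f g
    rw [← Finset.sum_sub_distrib]
    refine Finset.sum_congr rfl fun w _ => ?_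
    rw [← Finset.sum_sub_distrib, Lap, Finset.mul_sum]
    refine Finset.sum_congr rfl fun u _ => ?_
    ring
  rw [key, key]
  congr 1
  · simp only [mul_comm]
  · rw [Finset.sum_comm]
    refine Finset.sum_congr rfl fun w _ => Finset.sum_congr rfl fun u _ => ?_
    rw [yy_comm]; ring

lemma Lap_sum (E : Finset (Sym2 V)) (x : Sym2 V → K) (g : V → K) :
    ∑ w, Lap E x g w = 0 := by
  have := Lap_symm E x (fun _ => 1) g
  simp only [one_mul] at this
  rw [this]
  simp [Lap]

lemma Lap_HH_harm {E : Finset (Sym2 V)} {x : Sym2 V → K} (hx : ∀ e ∈ E, x e ≠ 0)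
    (hE : ∀ u, s(u, u) ∉ E) {M : Finset V} {w j : V} (hw : w ∉ M) (hj : j ∈ M) :
    Lap E x (HH E x M j) w = 0 := by
  unfold Lap
  simp only [HH_formula hx hE hw hj]
  simp only [← Finset.sum_sub_distrib, Finset.mul_sum, ← mul_sub]
  rw [Finset.sum_comm]
  refine Finset.sum_eq_zero fun F hF => ?_
  rw [mem_RF] at hF
  have nwj : ¬ FR F w j := fun h => hw
    ((hF.2.2.1 w (Finset.mem_insert_self _ _) j (Finset.mem_insert_of_mem hj) h) ▸ hj)
  simp only [nwj, FR.refl, if_true, if_false, mul_zero, zero_add, one_mul]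
  have e : ∀ z u : V, yy E x w z * (wt E x F * (yy E x w u * ((if FR F u j then 1 else 0) -
      ((1 - if FR F w u then 1 else 0) * (if FR F z j then 1 else 0)
        + (if FR F w z then 1 else 0) * (if FR F u j then 1 else 0))))) =
      wt E x F * (yy E x w z * yy E x w u *
        ((if FR F u j then 1 else 0) * (1 - if FR F w z then 1 else 0)))
      - wt E x F * (yy E x w z * yy E x w u *
        ((if FR F z j then 1 else 0) * (1 - if FR F w u then 1 else 0))) := by
    intro z u; ring
  simp only [e, Finset.sum_sub_distrib]
  rw [sub_eq_zero, Finset.sum_comm]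
  refine Finset.sum_congr rfl fun z _ => Finset.sum_congr rfl fun u _ => ?_
  ring

lemma Lap_HH_root {E : Finset (Sym2 V)} {x : Sym2 V → K} (hx : ∀ e ∈ E, x e ≠ 0)
    (hE : ∀ u, s(u, u) ∉ E) {N : Finset V} {i j : V} (hi : i ∉ N) (hj : j ∈ N) :
    Lap E x (HH E x (insert i N) j) i = - HH E x N j i := by
  have hji : j ≠ i := by rintro rfl; exact hi hj
  rw [HH_formula hx hE hi hj i, Lap, HH_other E x (Finset.mem_insert_of_mem hj)
    (Finset.mem_insert_self _ _) hji]
  simp only [HH, zero_sub, mul_neg, Finset.sum_neg_distrib, Finset.mul_sum]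
  rw [neg_inj, Finset.sum_comm]
  refine Finset.sum_congr rfl fun F hF => ?_
  rw [mem_RF] at hF
  have nwj : ¬ FR F i j := fun h => hi
    ((hF.2.2.1 i (Finset.mem_insert_self _ _) j (Finset.mem_insert_of_mem hj) h) ▸ hj)
  refine Finset.sum_congr rfl fun u _ => ?_
  simp only [nwj, FR.refl, if_true, if_false, mul_zero, zero_add, one_mul]
  ring

/-- The basic quadratic identity, over a field with nonvanishing edge variables. -/
lemma rooted_identity {E : Finset (Sym2 V)} {x : Sym2 V → K} (hx : ∀ e ∈ E, x e ≠ 0)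
    (hE : ∀ u, s(u, u) ∉ E) {M : Finset V} {j c : V} (hj : j ∈ M) (hc : c ∈ M) (hjc : j ≠ c) :
    (∑ F ∈ RF E {j}, wt E x F) * (∑ F ∈ RF E M, wt E x F) =
      ∑ i ∈ M.erase j, HH E x (M.erase i) j i *
        (∑ F ∈ RF E {j, c}, wt E x F * (if FR F i j then 0 else 1)) := by
  set h := HH E x {c, j} j with hh
  set H := HH E x M j with hH
  set T := ∑ F ∈ RF E {j}, wt E x F with hT
  have hcj : c ∉ ({j} : Finset V) := by simp [hjc.symm]
  have L1 : ∀ w, w ∉ ({c, j} : Finset V) → Lap E x h w = 0 := fun w hw =>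
    Lap_HH_harm hx hE hw (by simp)
  have L2 : Lap E x h c = - T := by
    rw [hh, Lap_HH_root hx hE hcj (by simp)]
    congr 1
    unfold HH
    refine Finset.sum_congr rfl fun F hF => ?_
    rw [mem_RF] at hF
    obtain ⟨a, ha, hca⟩ := hF.2.2.2 c
    rw [Finset.mem_singleton] at ha
    subst ha
    simp [hca]
  have pair : ∀ f : V → K, (∀ w, w ∉ ({c, j} : Finset V) → f w = 0) → ∑ w, f w = f c + f j := by
    intro f hf
    rw [← Finset.sum_pair hjc.symm]
    symm
    exact Finset.sum_subset (Finset.subset_univ _) (fun w _ hw => hf w hw)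
  have L3 : Lap E x h j = T := by
    have := Lap_sum E x h
    rw [pair _ L1, L2] at this
    linear_combination this
  have S1 : ∑ w, H w * Lap E x h w = T * (∑ F ∈ RF E M, wt E x F) := by
    rw [pair _ (fun w hw => by rw [L1 w hw, mul_zero]), L3, hH, HH_self, HH_other E x hj hc hjc]
    ring
  have Q1 : ∀ w, w ∉ M → Lap E x H w = 0 := fun w hw => Lap_HH_harm hx hE hw hj
  have Q2 : ∀ i ∈ M.erase j, Lap E x H i = - HH E x (M.erase i) j i := by
    intro i hi
    rw [Finset.mem_erase] at hi
    have := Lap_HH_root (N := M.erase i) (i := i) (j := j) hx hE (by simp)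
      (Finset.mem_erase.2 ⟨hi.1.symm, hj⟩)
    rwa [Finset.insert_erase hi.2] at this
  have sumM : ∀ f : V → K, (∀ w, w ∉ M → f w = 0) → ∑ w, f w = f j + ∑ i ∈ M.erase j, f i := by
    intro f hf
    rw [Finset.add_sum_erase _ _ hj]
    symm
    exact Finset.sum_subset (Finset.subset_univ _) (fun w _ hw => hf w hw)
  have Q3 : Lap E x H j = ∑ i ∈ M.erase j, HH E x (M.erase i) j i := by
    have := Lap_sum E x H
    rw [sumM _ Q1, Finset.sum_congr rfl Q2, Finset.sum_neg_distrib] at this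
    linear_combination this
  rw [← S1, Lap_symm, sumM _ (fun w hw => by rw [Q1 w hw, mul_zero]), Q3, Finset.mul_sum,
    ← Finset.sum_add_distrib]
  refine Finset.sum_congr rfl fun i hi => ?_
  rw [Q2 i hi]
  have : ∑ F ∈ RF E {j, c}, wt E x F * (if FR F i j then 0 else 1) = h j - h i := by
    rw [hh, HH_self, HH, ← Finset.sum_sub_distrib, Finset.pair_comm]
    refine Finset.sum_congr rfl fun F _ => ?_
    split_ifs <;> ring
  rw [this]
  ring

end ForestSums

set_option linter.unusedSectionVars false
set_option linter.unusedVariables false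

section Transfer
open scoped Classical
variable {V : Type*} [Fintype V] [DecidableEq V]

lemma forestPoly_eq {R : Type*} [CommRing R] (G : SimpleGraph V) [DecidableRel G.Adj]
    (x : Sym2 V → R) {m : ℕ} (v : Fin m → V) (p : Fin m → Option ℕ) :
    forestPoly G x v p = ∑ F ∈ G.edgeFinset.powerset,
      if IsCompatibleForest G v p F then ∏ e ∈ G.edgeFinset \ F, x e else 0 := by
  unfold forestPoly
  refine Finset.sum_congr rfl fun F _ => ?_
  simp only

lemma forestPoly_map {R S : Type*} [CommRing R] [CommRing S] (φ : R →+* S)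
    (G : SimpleGraph V) [DecidableRel G.Adj]
    (x : Sym2 V → R) {m : ℕ} (v : Fin m → V) (p : Fin m → Option ℕ) :
    φ (forestPoly G x v p) = forestPoly G (fun e => φ (x e)) v p := by
  rw [forestPoly_eq, forestPoly_eq, map_sum]
  refine Finset.sum_congr rfl fun F _ => ?_
  split_ifs
  · rw [map_prod]
  · simp

lemma compat_iff {G : SimpleGraph V} [DecidableRel G.Adj] {m : ℕ} {v : Fin m → V}
    {p : Fin m → Option ℕ} {F : Finset (Sym2 V)} (hp : ∀ i, p i ≠ none) :
    IsCompatibleForest G v p F ↔ F ⊆ G.edgeFinset ∧ FA F ∧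
      (∀ i j, FR F (v i) (v j) ↔ p i = p j) ∧ ∀ w, ∃ i, FR F w (v i) := by
  have h1 : ((F : Set (Sym2 V)) ⊆ G.edgeSet) ↔ F ⊆ G.edgeFinset := by
    rw [← SimpleGraph.coe_edgeFinset, Finset.coe_subset]
  unfold IsCompatibleForest FA FR
  rw [h1]
  simp [hp]

variable {G : SimpleGraph V} [DecidableRel G.Adj] {m : ℕ} {v : Fin m → V}

lemma compat_const {F : Finset (Sym2 V)} (j : Fin m) :
    IsCompatibleForest G v (fun _ => some 0) F ↔ Rooted G.edgeFinset {v j} F := by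
  rw [compat_iff (by simp)]
  unfold Rooted
  refine and_congr_right fun _ => and_congr_right fun _ => ?_
  simp only [Finset.mem_singleton]
  constructor
  · rintro ⟨h1, h2⟩
    refine ⟨by rintro a rfl b rfl _; rfl, fun w => ⟨v j, rfl, ?_⟩⟩
    obtain ⟨i, hi⟩ := h2 w
    exact hi.trans ((h1 i j).2 (by simp))
  · rintro ⟨_, h2⟩
    have h3 : ∀ w, FR F w (v j) := by
      intro w
      obtain ⟨a, rfl, h⟩ := h2 w
      exact h
    exact ⟨fun i k => ⟨fun _ => by simp, fun _ => (h3 _).trans (h3 _).symm⟩, fun w => ⟨j, h3 w⟩⟩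

lemma compat_disc (hv : Function.Injective v) {F : Finset (Sym2 V)} :
    IsCompatibleForest G v (fun i => some (i : ℕ)) F ↔
      Rooted G.edgeFinset (univ.image v) F := by
  rw [compat_iff (by simp)]
  unfold Rooted
  refine and_congr_right fun _ => and_congr_right fun _ => ?_
  simp only [Option.some_inj, Fin.val_inj, Finset.mem_image, Finset.mem_univ, true_and,
    forall_exists_index, forall_apply_eq_imp_iff, exists_exists_eq_and]
  refine and_congr_left fun _ => ?_
  constructor
  · intro h i j hij
    rw [(h i j).1 hij]
  · intro h i j
    exact ⟨fun hij => hv (h i j hij), fun hij => hij ▸ FR.refl _ _⟩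

lemma partA_eq_iff {s : Finset (Fin m)} {a b : Fin m} :
    partA s a = partA s b ↔ (a = b ∨ (a ∈ s ∧ b ∈ s)) := by
  unfold partA
  have ha := a.2
  have hb := b.2
  split_ifs with h1 h2 h2
  · simp [h1, h2]
  · simp only [Option.some_inj, h1, h2]
    constructor
    · intro h; omega
    · rintro (h | h)
      · exact absurd (h ▸ h1) h2
      · exact absurd h.2 id
  · simp only [Option.some_inj, h1, h2]
    constructor
    · intro h; omega
    · rintro (h | h)
      · exact absurd (h ▸ h2) h1
      · exact absurd h.1 id
  · simp [h1, h2, Fin.val_inj]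

lemma partA_ne_none (s : Finset (Fin m)) (i : Fin m) : partA s i ≠ none := by
  unfold partA; split_ifs <;> simp

lemma partB_ne_none (s : Finset (Fin m)) (i : Fin m) : partB s i ≠ none := by
  unfold partB; split_ifs <;> simp

lemma partB_eq_iff {S : Finset (Fin m)} {a b : Fin m} :
    partB S a = partB S b ↔ (a ∈ S ↔ b ∈ S) := by
  unfold partB; split_ifs <;> simp [*]

lemma compat_A (hv : Function.Injective v) {i j : Fin m} (hij : i ≠ j) {F : Finset (Sym2 V)} :
    IsCompatibleForest G v (partA {i, j}) F ↔
      (Rooted G.edgeFinset ((univ.image v).erase (v i)) F ∧ FR F (v i) (v j)) := by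
  rw [compat_iff (partA_ne_none _)]
  unfold Rooted
  simp only [and_assoc]
  refine and_congr_right fun _ => and_congr_right fun _ => ?_
  simp only [partA_eq_iff, Finset.mem_insert, Finset.mem_singleton, Finset.mem_erase,
    Finset.mem_image, Finset.mem_univ, true_and]
  constructor
  · rintro ⟨h1, h2⟩
    have hR : FR F (v i) (v j) := (h1 i j).2 (by simp)
    refine ⟨?_, ?_, hR⟩
    · rintro _ ⟨ha, a, rfl⟩ _ ⟨hb, b, rfl⟩ hab
      have ha' : a ≠ i := fun h => ha (h ▸ rfl)
      have hb' : b ≠ i := fun h => hb (h ▸ rfl)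
      rcases (h1 a b).1 hab with h | ⟨h, h'⟩
      · rw [h]
      · rw [h.resolve_left ha', h'.resolve_left hb']
    · intro w
      obtain ⟨k, hk⟩ := h2 w
      by_cases hki : k = i
      · exact ⟨v j, ⟨fun h => hij (hv h).symm, j, rfl⟩, (hki ▸ hk).trans hR⟩
      · exact ⟨v k, ⟨fun h => hki (hv h), k, rfl⟩, hk⟩
  · rintro ⟨h1, h2, hR⟩
    have key : ∀ a b, a ≠ i → b ≠ i → FR F (v a) (v b) → a = b := fun a b ha hb hab =>
      hv (h1 (v a) ⟨fun h => ha (hv h), a, rfl⟩ (v b) ⟨fun h => hb (hv h), b, rfl⟩ hab)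
    refine ⟨fun a b => ⟨fun hab => ?_, ?_⟩, ?_⟩
    · by_cases ha : a = i <;> by_cases hb : b = i
      · left; rw [ha, hb]
      · right
        subst ha
        exact ⟨Or.inl rfl, Or.inr (key b j hb hij.symm (hab.symm.trans hR))⟩
      · right
        subst hb
        exact ⟨Or.inr (key a j ha hij.symm (hab.trans hR)), Or.inl rfl⟩
      · left; exact key a b ha hb hab
    · rintro (rfl | ⟨rfl | rfl, rfl | rfl⟩)
      · exact FR.refl _ _
      · exact FR.refl _ _
      · exact hR
      · exact hR.symm
      · exact FR.refl _ _
    · intro w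
      obtain ⟨_, ⟨_, k, rfl⟩, hk⟩ := h2 w
      exact ⟨k, hk⟩

/-- `S` separates `j` from both `i` and `c`. -/
def SepJ (i j c : Fin m) (S : Finset (Fin m)) : Prop := (i ∈ S ↔ j ∉ S) ∧ (c ∈ S ↔ j ∉ S)

lemma exists_unique_B (hm : 0 < m) (hv : Function.Injective v) {i j c : Fin m} (hjc : j ≠ c)
    {F : Finset (Sym2 V)} (hF : Rooted G.edgeFinset {v j, v c} F) (hi : ¬ FR F (v i) (v j)) :
    ∃! S : BIdx m, IsCompatibleForest G v (partB S.1) F ∧ SepJ i j c S.1 := by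
  obtain ⟨h1, h2, h3, h4⟩ := hF
  have hnjc : ¬ FR F (v j) (v c) := fun h => hjc (hv (h3 _ (by simp) _ (by simp) h))
  have hor : ∀ w, FR F w (v j) ∨ FR F w (v c) := by
    intro w
    obtain ⟨a, ha, h⟩ := h4 w
    simp only [Finset.mem_insert, Finset.mem_singleton] at ha
    rcases ha with rfl | rfl
    · exact Or.inl h
    · exact Or.inr h
  have two : ∀ a b d : V, ¬ FR F a d → ¬ FR F b d → FR F a b := by
    intro a b d ha hb
    rcases hor a with h | h <;> rcases hor b with h' | h' <;> rcases hor d with h'' | h''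
    · exact h.trans h'.symm
    · exact h.trans h'.symm
    · exact absurd (h.trans h''.symm) ha
    · exact absurd (h'.trans h''.symm) hb
    · exact absurd (h'.trans h''.symm) hb
    · exact absurd (h.trans h''.symm) ha
    · exact h.trans h'.symm
    · exact h.trans h'.symm
  let z : Fin m := ⟨0, hm⟩
  let S : Finset (Fin m) := univ.filter (fun k => FR F (v k) (v z))
  have memS : ∀ k, k ∈ S ↔ FR F (v k) (v z) := fun k => by simp [S]
  have hS : (∃ i ∈ S, (i : ℕ) = 0) ∧ S ≠ Finset.univ := by
    refine ⟨⟨z, (memS _).2 (FR.refl _ _), rfl⟩, fun h => ?_⟩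
    have a1 := (memS j).1 (h ▸ Finset.mem_univ _)
    have a2 := (memS c).1 (h ▸ Finset.mem_univ _)
    exact hnjc (a1.trans a2.symm)
  refine ⟨⟨S, hS⟩, ⟨?_, ?_⟩, ?_⟩
  · rw [compat_iff (partB_ne_none _)]
    refine ⟨h1, h2, fun a b => ?_, fun w => ?_⟩
    · rw [partB_eq_iff, memS, memS]
      constructor
      · intro h
        exact ⟨fun h' => h.symm.trans h', fun h' => h.trans h'⟩
      · intro h
        by_cases h' : FR F (v a) (v z)
        · exact h'.trans (h.1 h').symm
        · exact two _ _ _ h' (fun h'' => h' (h.2 h''))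
    · rcases hor w with h | h
      · exact ⟨_, h⟩
      · exact ⟨_, h⟩
  · have gen : ∀ a : Fin m, ¬ FR F (v a) (v j) → (a ∈ S ↔ j ∉ S) := by
      intro a ha
      rw [memS, memS]
      constructor
      · intro h h'
        exact ha (h.trans h'.symm)
      · intro h
        by_contra h'
        exact ha (two _ _ _ h' h)
    exact ⟨gen i hi, gen c (fun h => hnjc h.symm)⟩
  · rintro ⟨S', hS'⟩ ⟨hc, _⟩
    apply Subtype.ext
    ext k
    rw [memS]
    rw [compat_iff (partB_ne_none _)] at hc
    rw [hc.2.2.1, partB_eq_iff]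
    obtain ⟨y, hy, hy0⟩ := hS'.1
    have : y = z := Fin.ext hy0
    subst this
    simp [hy]

lemma rooted_of_compat_B {i j c : Fin m} (hv : Function.Injective v)
    {F : Finset (Sym2 V)} {S : Finset (Fin m)}
    (h : IsCompatibleForest G v (partB S) F) (hs : SepJ i j c S) :
    Rooted G.edgeFinset {v j, v c} F ∧ ¬ FR F (v i) (v j) := by
  rw [compat_iff (partB_ne_none _)] at h
  obtain ⟨h1, h2, h3, h4⟩ := h
  simp only [partB_eq_iff] at h3
  obtain ⟨s1, s2⟩ := hs
  refine ⟨⟨h1, h2, ?_, ?_⟩, ?_⟩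
  · intro a ha b hb hab
    simp only [Finset.mem_insert, Finset.mem_singleton] at ha hb
    rcases ha with rfl | rfl <;> rcases hb with rfl | rfl
    · rfl
    · have := (h3 _ _).1 hab; tauto
    · have := (h3 _ _).1 hab; tauto
    · rfl
  · intro w
    obtain ⟨k, hk⟩ := h4 w
    by_cases hkj : (k ∈ S ↔ j ∈ S)
    · exact ⟨v j, by simp, hk.trans ((h3 _ _).2 hkj)⟩
    · exact ⟨v c, by simp, hk.trans ((h3 _ _).2 (by tauto))⟩
  · rw [h3]
    tauto

lemma sum_B_eq {K : Type*} [Field K] (x : Sym2 V → K) (hm : 0 < m)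
    (hv : Function.Injective v) {i j c : Fin m} (hjc : j ≠ c) :
    ∑ S : BIdx m, (if SepJ i j c S.1 then forestPoly G x v (partB S.1) else 0) =
      ∑ F ∈ RF G.edgeFinset {v j, v c},
        wt G.edgeFinset x F * (if FR F (v i) (v j) then 0 else 1) := by
  have e1 : ∀ S : BIdx m, (if SepJ i j c S.1 then forestPoly G x v (partB S.1) else 0) =
      ∑ F ∈ G.edgeFinset.powerset,
        if IsCompatibleForest G v (partB S.1) F ∧ SepJ i j c S.1 then wt G.edgeFinset x F else 0 := by
    intro S
    rw [forestPoly_eq]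
    by_cases h : SepJ i j c S.1
    · simp only [h, if_true, and_true]; rfl
    · simp [h]
  simp only [e1]
  rw [Finset.sum_comm, RF, Finset.sum_filter]
  refine Finset.sum_congr rfl fun F hF => ?_
  by_cases h : Rooted G.edgeFinset {v j, v c} F ∧ ¬ FR F (v i) (v j)
  · obtain ⟨S, hS, hu⟩ := exists_unique_B hm hv hjc h.1 h.2
    rw [Finset.sum_eq_single S]
    · rw [if_pos hS, if_pos h.1, if_neg h.2, mul_one]
    · intro S' _ hne
      rw [if_neg]
      exact fun h' => hne (hu S' h')
    · simp
  · rw [Finset.sum_eq_zero]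
    · by_cases h1 : Rooted G.edgeFinset {v j, v c} F
      · have : FR F (v i) (v j) := by tauto
        simp [this]
      · simp [h1]
    · intro S _
      rw [if_neg]
      exact fun h' => h (rooted_of_compat_B hv h'.1 h'.2)

lemma forestPoly_identity_field {K : Type*} [Field K] (x : Sym2 V → K)
    (hx : ∀ e ∈ G.edgeFinset, x e ≠ 0) (hm : 0 < m)
    (hv : Function.Injective v) {j c : Fin m} (hjc : j ≠ c) :
    forestPoly G x v (fun _ => some 0) * forestPoly G x v (fun i => some (i : ℕ)) =
      ∑ i ∈ univ.erase j, forestPoly G x v (partA {i, j}) *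
        ∑ S : BIdx m, (if SepJ i j c S.1 then forestPoly G x v (partB S.1) else 0) := by
  have hE : ∀ u, s(u, u) ∉ G.edgeFinset := by simp
  have hid := rooted_identity (E := G.edgeFinset) (M := univ.image v) (j := v j) (c := v c)
    hx hE (by simp) (by simp) (fun h => hjc (hv h))
  have e1 : forestPoly G x v (fun _ => some 0) =
      ∑ F ∈ RF G.edgeFinset {v j}, wt G.edgeFinset x F := by
    rw [forestPoly_eq, RF, Finset.sum_filter]
    simp only [compat_const j]; rfl
  have e2 : forestPoly G x v (fun i => some (i : ℕ)) =
      ∑ F ∈ RF G.edgeFinset (univ.image v), wt G.edgeFinset x F := by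
    rw [forestPoly_eq, RF, Finset.sum_filter]
    simp only [compat_disc hv]; rfl
  rw [e1, e2, hid, ← Finset.image_erase hv, Finset.sum_image (fun a _ b _ h => hv h)]
  refine Finset.sum_congr rfl fun i hi => ?_
  have hij : i ≠ j := (Finset.mem_erase.1 hi).1
  rw [sum_B_eq x hm hv hjc]
  congr 1
  rw [forestPoly_eq, HH, RF, Finset.sum_filter]
  simp only [compat_A hv hij]
  refine Finset.sum_congr rfl fun F _ => ?_
  by_cases h1 : Rooted G.edgeFinset ((univ.image v).erase (v i)) F <;>
    by_cases h2 : FR F (v i) (v j) <;> simp [h1, h2, wt]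

lemma forestPoly_identity (x : Sym2 V → ℚ) (hm : 0 < m)
    (hv : Function.Injective v) {j c : Fin m} (hjc : j ≠ c) :
    forestPoly G x v (fun _ => some 0) * forestPoly G x v (fun i => some (i : ℕ)) =
      ∑ i ∈ univ.erase j, forestPoly G x v (partA {i, j}) *
        ∑ S : BIdx m, (if SepJ i j c S.1 then forestPoly G x v (partB S.1) else 0) := by
  have hP : forestPoly G (fun e => (MvPolynomial.X e : MvPolynomial (Sym2 V) ℚ)) v
        (fun _ => some 0) *
      forestPoly G (fun e => (MvPolynomial.X e : MvPolynomial (Sym2 V) ℚ)) v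
        (fun i => some (i : ℕ)) =
      ∑ i ∈ univ.erase j,
        forestPoly G (fun e => (MvPolynomial.X e : MvPolynomial (Sym2 V) ℚ)) v (partA {i, j}) *
        ∑ S : BIdx m, (if SepJ i j c S.1 then
          forestPoly G (fun e => (MvPolynomial.X e : MvPolynomial (Sym2 V) ℚ)) v (partB S.1)
          else 0) := by
    apply IsFractionRing.injective (MvPolynomial (Sym2 V) ℚ)
      (FractionRing (MvPolynomial (Sym2 V) ℚ))
    simp only [map_mul, map_sum, apply_ite (algebraMap (MvPolynomial (Sym2 V) ℚ)
      (FractionRing (MvPolynomial (Sym2 V) ℚ))), map_zero, forestPoly_map]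
    refine forestPoly_identity_field _ ?_ hm hv hjc
    intro e _ h
    have := IsFractionRing.injective (MvPolynomial (Sym2 V) ℚ)
      (FractionRing (MvPolynomial (Sym2 V) ℚ)) (h.trans (map_zero _).symm)
    exact MvPolynomial.X_ne_zero e this
  have := congrArg (MvPolynomial.eval x) hP
  simp only [map_mul, map_sum, apply_ite (MvPolynomial.eval x), map_zero, forestPoly_map,
    MvPolynomial.eval_X] at this
  exact this

/-- Coefficients of the column expansion identity. -/
noncomputable def ecoef (j c : Fin m) (q : AIdx m × BIdx m) : ℚ :=
  if j ∈ q.1.1 ∧ (∀ i ∈ q.1.1, i ≠ j → SepJ i j c q.2.1) then 1 else 0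

/-- The `A`-index with two-element part `{i, j}`. -/
def mkA (i j : Fin m) (h : i ≠ j) : AIdx m := ⟨{i, j}, Finset.card_pair h⟩

lemma mkA_val (i j : Fin m) (h : i ≠ j) : (mkA i j h).1 = {i, j} := rfl

lemma sum_AIdx (j : Fin m) (g : AIdx m → ℚ) (g' : Fin m → ℚ)
    (h0 : ∀ s : AIdx m, j ∉ s.1 → g s = 0)
    (h : ∀ (s : AIdx m) i, i ≠ j → s.1 = {i, j} → g s = g' i) :
    ∑ s, g s = ∑ i ∈ univ.erase j, g' i := by
  symm
  have : ∑ s, g s = ∑ s ∈ univ.filter (fun s : AIdx m => j ∈ s.1), g s := by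
    rw [Finset.sum_filter]
    refine Finset.sum_congr rfl fun s _ => ?_
    split_ifs with hs
    · rfl
    · exact h0 s hs
  rw [this]
  refine Finset.sum_bij (fun i hi => mkA i j (Finset.mem_erase.1 hi).1) ?_ ?_ ?_ ?_
  · intro i hi
    rw [Finset.mem_filter, mkA_val]
    simp
  · intro a ha b hb hab
    have h1 : ({a, j} : Finset (Fin m)) = {b, j} := congrArg Subtype.val hab
    have : a ∈ ({b, j} : Finset (Fin m)) := h1 ▸ by simp
    simp only [Finset.mem_insert, Finset.mem_singleton] at this
    exact this.resolve_right (Finset.mem_erase.1 ha).1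
  · rintro s hj
    rw [Finset.mem_filter] at hj
    replace hj := hj.2
    obtain ⟨a, b, hab, hs⟩ := Finset.card_eq_two.1 s.2
    rw [hs] at hj
    simp only [Finset.mem_insert, Finset.mem_singleton] at hj
    rcases hj with rfl | rfl
    · exact ⟨b, by simp [hab.symm], Subtype.ext ((Finset.pair_comm _ _).trans hs.symm)⟩
    · exact ⟨a, by simp [hab], Subtype.ext hs.symm⟩
  · intro i hi
    exact (h _ i (Finset.mem_erase.1 hi).1 rfl).symm

lemma ecoef_identity (x : Sym2 V → ℚ) (hm : 0 < m)
    (hv : Function.Injective v) {j c : Fin m} (hjc : j ≠ c) :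
    forestPoly G x v (fun _ => some 0) * forestPoly G x v (fun i => some (i : ℕ)) =
      ∑ q : AIdx m × BIdx m, ecoef j c q *
        (forestPoly G x v (partA q.1.val) * forestPoly G x v (partB q.2.val)) := by
  rw [forestPoly_identity x hm hv hjc, Fintype.sum_prod_type]
  symm
  apply sum_AIdx
  · intro s hs
    refine Finset.sum_eq_zero fun S _ => ?_
    simp [ecoef, hs]
  · intro s i hij hs
    rw [Finset.mul_sum]
    refine Finset.sum_congr rfl fun S _ => ?_
    simp only [ecoef, hs]
    have : (j ∈ ({i, j} : Finset (Fin m)) ∧ ∀ i' ∈ ({i, j} : Finset (Fin m)), i' ≠ j →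
        SepJ i' j c S.1) ↔ SepJ i j c S.1 := by
      constructor
      · intro h
        exact h.2 i (by simp) hij
      · intro h
        refine ⟨by simp, fun i' hi' hne => ?_⟩
        simp only [Finset.mem_insert, Finset.mem_singleton] at hi'
        rw [hi'.resolve_right hne]
        exact h
    rw [if_congr this rfl rfl]
    split_ifs <;> simp

end Transfer

set_option linter.unusedSectionVars false
set_option linter.unusedVariables false

section Extract

lemma extract_coeffs {ι : Type*} [DecidableEq ι] (I : Finset ι) (T : ι → ι → ℚ)
    (h : ∀ z : ι → ℚ, ∑ c ∈ I, ∑ d ∈ I, T c d * ((∏ c' ∈ I.erase c, z c') * z d) = 0) :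
    (∀ a ∈ I, ∀ b ∈ I, a ≠ b → T a b = 0) ∧ ∑ c ∈ I, T c c = 0 := by
  have h1 : ∀ a ∈ I, ∀ z : ι → ℚ, z a = 0 → (∏ c' ∈ I.erase a, z c') * ∑ d ∈ I, T a d * z d = 0 := by
    intro a ha z hz
    have := h z
    rw [Finset.sum_eq_single_of_mem a ha] at this
    · rw [Finset.mul_sum, ← this]
      exact Finset.sum_congr rfl fun d _ => by ring
    · intro c hc hca
      refine Finset.sum_eq_zero fun d _ => ?_
      rw [Finset.prod_eq_zero (Finset.mem_erase.2 ⟨hca.symm, ha⟩) hz]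
      ring
  have h2 : ∀ a ∈ I, ∀ b ∈ I, a ≠ b → T a b = 0 := by
    intro a ha b hb hab
    have e1 := h1 a ha (fun d => if d = a then 0 else 1) (by simp)
    have e2 := h1 a ha (fun d => (if d = a then 0 else 1) + if d = b then 1 else 0) (by simp [hab])
    rw [mul_eq_zero, Finset.prod_eq_zero_iff] at e1 e2
    replace e1 := e1.resolve_left (by
      rintro ⟨c, hc, h0⟩
      simp [(Finset.mem_erase.1 hc).1] at h0)
    replace e2 := e2.resolve_left (by
      rintro ⟨c, hc, h0⟩
      simp only [(Finset.mem_erase.1 hc).1, if_false] at h0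
      split_ifs at h0 <;> norm_num at h0)
    simp only [mul_add, Finset.sum_add_distrib] at e2
    rw [e1, zero_add] at e2
    simpa [hb] using e2
  refine ⟨h2, ?_⟩
  have := h (fun _ => 1)
  rw [← this]
  refine Finset.sum_congr rfl fun c hc => ?_
  rw [Finset.sum_eq_single_of_mem c hc]
  · simp
  · intro d hd hdc
    rw [h2 c hc d hd hdc.symm]
    ring

end Extract

section DoubleStar
open scoped Classical
variable {m : ℕ}

/-- Parent function of the double star with centres `i`, `j`. -/
def par (i j : Fin m) (S : Finset (Fin m)) (c : Fin m) : Fin m :=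
  if c = i then j else if c ∈ S then i else j

/-- The edge from `c` to its parent. -/
def eg (i j : Fin m) (S : Finset (Fin m)) (c : Fin m) : Sym2 (Fin m) := s(c, par i j S c)

/-- The descendants of `c`. -/
def desc (i : Fin m) (S : Finset (Fin m)) (c : Fin m) : Finset (Fin m) := if c = i then S else {c}

/-- The edges of the double star. -/
def dsE (i j : Fin m) (S : Finset (Fin m)) : Finset (Sym2 (Fin m)) :=
  (univ.erase j).image (eg i j S)

variable {i j : Fin m} {S : Finset (Fin m)}

lemma par_ne (hi : i ∈ S) (hj : j ∉ S) {c : Fin m} (hc : c ≠ j) : par i j S c ≠ c := by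
  unfold par
  split_ifs with h1 h2
  · exact hc.symm
  · exact fun h => h1 h.symm
  · exact hc.symm

lemma eg_inj (hi : i ∈ S) (hj : j ∉ S) {c d : Fin m} (hc : c ≠ j) (hd : d ≠ j)
    (h : eg i j S c = eg i j S d) : c = d := by
  unfold eg at h
  rw [Sym2.eq_iff] at h
  rcases h with ⟨h, _⟩ | ⟨h1, h2⟩
  · exact h
  · exfalso
    have hci : c = i := by
      unfold par at h1
      split_ifs at h1
      · exact absurd h1 hc
      · exact h1
      · exact absurd h1 hc
    have : par i j S c = j := by unfold par; rw [if_pos hci]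
    exact hd (h2.symm.trans this)

lemma eg_mem {c : Fin m} (hc : c ≠ j) : eg i j S c ∈ dsE i j S :=
  Finset.mem_image_of_mem _ (by simp [hc])

lemma mem_dsE {e : Sym2 (Fin m)} : e ∈ dsE i j S ↔ ∃ c, c ≠ j ∧ eg i j S c = e := by
  simp [dsE]

lemma self_mem_desc (hi : i ∈ S) (c : Fin m) : c ∈ desc i S c := by
  unfold desc; split_ifs with h <;> simp [h, hi]

lemma j_notMem_desc (hj : j ∉ S) {c : Fin m} (hc : c ≠ j) : j ∉ desc i S c := by
  unfold desc; split_ifs with h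
  · exact hj
  · simp [hc.symm]

lemma par_notMem_desc (hi : i ∈ S) (hj : j ∉ S) {c : Fin m} (hc : c ≠ j) :
    par i j S c ∉ desc i S c := by
  by_cases h : c = i
  · simp [par, desc, h, hj]
  · have := par_ne hi hj hc
    simp [desc, h, this]

lemma desc_cut (hi : i ∈ S) (hj : j ∉ S) {c d : Fin m} (hc : c ≠ j) (hd : d ≠ j) (hdc : d ≠ c) :
    d ∈ desc i S c ↔ par i j S d ∈ desc i S c := by
  by_cases h : c = i
  · subst h
    simp only [desc, if_true, par, hdc, if_false]
    split_ifs with h2 <;> simp [h2, hi, hj]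
  · simp only [desc, h, if_false, Finset.mem_singleton, hdc, false_iff]
    unfold par
    split_ifs
    · exact hc.symm
    · exact fun h' => h h'.symm
    · exact hc.symm

lemma FR_desc (hi : i ∈ S) (hj : j ∉ S) {F : Finset (Sym2 (Fin m))} (hF : F ⊆ dsE i j S)
    {c : Fin m} (hc : c ≠ j) (hcF : eg i j S c ∉ F) {a b : Fin m} (h : FR F a b) :
    a ∈ desc i S c ↔ b ∈ desc i S c := by
  have step : ∀ a b, s(a, b) ∈ F → (a ∈ desc i S c ↔ b ∈ desc i S c) := by
    intro a b hab
    obtain ⟨d, hd, he⟩ := mem_dsE.1 (hF hab)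
    have hdc : d ≠ c := by
      rintro rfl
      exact hcF (he ▸ hab)
    have := desc_cut hi hj hc hd hdc
    unfold eg at he
    rw [Sym2.eq_iff] at he
    rcases he with ⟨rfl, rfl⟩ | ⟨rfl, rfl⟩
    · exact this
    · exact this.symm
  exact FR.cut (P := fun b => (a ∈ desc i S c ↔ b ∈ desc i S c))
    (fun x y hxy hx => hx.trans (step x y hxy)) h Iff.rfl

lemma dsE_acyclic (hi : i ∈ S) (hj : j ∉ S) : FA (dsE i j S) := by
  unfold FA
  rw [SimpleGraph.isAcyclic_iff_forall_adj_isBridge]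
  intro a b hab
  rw [SimpleGraph.isBridge_iff]
  intro h
  simp only [SimpleGraph.fromEdgeSet_adj, Finset.mem_coe] at hab
  obtain ⟨c, hc, he⟩ := mem_dsE.1 hab.1
  have h2 : FR ((dsE i j S).erase (eg i j S c)) a b := by
    refine SimpleGraph.Reachable.mono ?_ h
    intro x y hxy
    rw [he]
    simp at hxy ⊢
    tauto
  have h3 := FR_desc hi hj (Finset.erase_subset _ _) hc (by simp) h2
  have h4 := self_mem_desc hi c
  have h5 := par_notMem_desc hi hj hc
  unfold eg at he
  rw [Sym2.eq_iff] at he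
  rcases he with ⟨rfl, rfl⟩ | ⟨rfl, rfl⟩ <;> tauto

lemma FR_erase_edge (hi : i ∈ S) (hj : j ∉ S) {c d : Fin m} (hc : c ≠ j) (hd : d ≠ j)
    (hdc : d ≠ c) : FR ((dsE i j S).erase (eg i j S c)) d (par i j S d) := by
  apply FR.edge
  exact Finset.mem_erase.2 ⟨fun h => hdc (eg_inj hi hj hd hc h), eg_mem hd⟩

lemma FR_of_mem_desc (hi : i ∈ S) (hj : j ∉ S) {c a : Fin m} (hc : c ≠ j)
    (ha : a ∈ desc i S c) : FR ((dsE i j S).erase (eg i j S c)) a c := by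
  by_cases hac : a = c
  · subst hac; exact FR.refl _ _
  · by_cases h : c = i
    · subst h
      simp only [desc, if_true] at ha
      have haj : a ≠ j := by rintro rfl; exact hj ha
      have := FR_erase_edge hi hj hc haj hac
      simpa [par, hac, ha] using this
    · simp [desc, h] at ha
      exact absurd ha hac

lemma FR_of_notMem_desc (hi : i ∈ S) (hj : j ∉ S) {c a : Fin m} (hc : c ≠ j)
    (ha : a ∉ desc i S c) : FR ((dsE i j S).erase (eg i j S c)) a j := by
  by_cases haj : a = j
  · subst haj; exact FR.refl _ _
  have hac : a ≠ c := by rintro rfl; exact ha (self_mem_desc hi _)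
  have hij : i ≠ j := by rintro rfl; exact hj hi
  have h1 := FR_erase_edge hi hj hc haj hac
  by_cases hai : a = i
  · simpa [par, hai] using h1
  by_cases haS : a ∈ S
  · have hci : i ≠ c := by
      rintro rfl
      simp [desc] at ha
      exact ha haS
    have h2 := FR_erase_edge hi hj hc hij hci
    have h3 : par i j S a = i := by simp [par, hai, haS]
    have h4 : par i j S i = j := by simp [par]
    rw [h3] at h1
    rw [h4] at h2
    exact h1.trans h2
  · have h3 : par i j S a = j := by simp [par, hai, haS]
    rwa [h3] at h1

/-- The double star graph. -/
def dsG (i j : Fin m) (S : Finset (Fin m)) : SimpleGraph (Fin m) :=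
  SimpleGraph.fromEdgeSet (dsE i j S : Set (Sym2 (Fin m)))

lemma dsG_edgeFinset (hi : i ∈ S) (hj : j ∉ S) : (dsG i j S).edgeFinset = dsE i j S := by
  ext e
  rw [SimpleGraph.mem_edgeFinset, dsG, SimpleGraph.edgeSet_fromEdgeSet]
  simp only [Set.mem_sdiff, Finset.mem_coe]
  refine ⟨fun h => h.1, fun h => ⟨h, ?_⟩⟩
  obtain ⟨c, hc, rfl⟩ := mem_dsE.1 h
  have := par_ne hi hj hc
  simpa [eg] using this.symm

lemma FR_empty {V : Type*} {a b : V} (h : FR (∅ : Finset (Sym2 V)) a b) : a = b :=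
  FR.cut (P := fun b => a = b) (by simp) h rfl

lemma ds_compat_A (hi : i ∈ S) (hj : j ∉ S) {s : Finset (Fin m)} (hs : s.card = 2)
    {F : Finset (Sym2 (Fin m))} :
    IsCompatibleForest (dsG i j S) id (partA s) F ↔
      ∃ c ∈ univ.erase j, F = {eg i j S c} ∧ s = {c, par i j S c} := by
  rw [compat_iff (partA_ne_none _), dsG_edgeFinset hi hj]
  simp only [partA_eq_iff, id]
  constructor
  · rintro ⟨h1, h2, h3, h4⟩
    have key : ∀ d, d ≠ j → eg i j S d ∈ F → s = {d, par i j S d} := by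
      intro d hd hdF
      have hne := par_ne hi hj hd
      rcases (h3 d (par i j S d)).1 (FR.edge hdF) with h | ⟨h, h'⟩
      · exact absurd h.symm hne
      · symm
        apply Finset.eq_of_subset_of_card_le
        · intro a ha
          simp only [Finset.mem_insert, Finset.mem_singleton] at ha
          rcases ha with rfl | rfl
          · exact h
          · exact h'
        · rw [hs, Finset.card_pair hne.symm]
    obtain ⟨k, l, hkl, rfl⟩ := Finset.card_eq_two.1 hs
    have hR : FR F k l := (h3 k l).2 (by simp)
    obtain ⟨u, hku, hu, _⟩ := exists_first_edge hR hkl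
    obtain ⟨c, hc, hce⟩ := mem_dsE.1 (h1 hu)
    have hcF : eg i j S c ∈ F := hce ▸ hu
    have hsc := key c hc hcF
    refine ⟨c, by simp [hc], ?_, hsc⟩
    ext e
    rw [Finset.mem_singleton]
    constructor
    · intro he
      obtain ⟨d, hd, rfl⟩ := mem_dsE.1 (h1 he)
      have hsd := key d hd he
      rw [hsc] at hsd
      have hne := par_ne hi hj hc
      unfold eg
      have a1 : c ∈ ({d, par i j S d} : Finset (Fin m)) := hsd ▸ by simp
      have a2 : par i j S c ∈ ({d, par i j S d} : Finset (Fin m)) := hsd ▸ by simp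
      simp only [Finset.mem_insert, Finset.mem_singleton] at a1 a2
      rw [Sym2.eq_iff]
      rcases a1 with a1 | a1 <;> rcases a2 with a2 | a2
      · exact absurd (a2.trans a1.symm) hne
      · exact Or.inl ⟨a1.symm, a2.symm⟩
      · exact Or.inr ⟨a2.symm, a1.symm⟩
      · exact absurd (a2.trans a1.symm) hne
    · rintro rfl
      exact hcF
  · rintro ⟨c, hc, rfl, rfl⟩
    have hcj : c ≠ j := by simpa using hc
    have hsub : {eg i j S c} ⊆ dsE i j S := Finset.singleton_subset_iff.2 (eg_mem hcj)
    refine ⟨hsub, (dsE_acyclic hi hj).anti hsub, fun a b => ?_, fun w => ⟨w, FR.refl _ _⟩⟩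
    have hins : ({eg i j S c} : Finset (Sym2 (Fin m))) = insert s(c, par i j S c) ∅ := rfl
    rw [hins, FR_insert]
    simp only [Finset.mem_insert, Finset.mem_singleton]
    constructor
    · rintro (h | ⟨h, h'⟩ | ⟨h, h'⟩)
      · exact Or.inl (FR_empty h)
      · exact Or.inr ⟨Or.inl (FR_empty h), Or.inr (FR_empty h').symm⟩
      · exact Or.inr ⟨Or.inr (FR_empty h), Or.inl (FR_empty h').symm⟩
    · rintro (rfl | ⟨rfl | h, rfl | h'⟩)
      · exact Or.inl (FR.refl _ _)
      · exact Or.inl (FR.refl _ _)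
      · rw [h']; exact Or.inr (Or.inl ⟨FR.refl _ _, FR.refl _ _⟩)
      · rw [h]; exact Or.inr (Or.inr ⟨FR.refl _ _, FR.refl _ _⟩)
      · rw [h, h']; exact Or.inl (FR.refl _ _)

/-- Normalisation of a bipartition: the side containing vertex `0`. -/
def normS (S : Finset (Fin m)) : Finset (Fin m) := if ∃ i ∈ S, (i : ℕ) = 0 then S else Sᶜ

lemma mem_normS_iff (S : Finset (Fin m)) (a b : Fin m) :
    (a ∈ normS S ↔ b ∈ normS S) ↔ (a ∈ S ↔ b ∈ S) := by
  unfold normS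
  split_ifs
  · rfl
  · simp only [Finset.mem_compl]; tauto

lemma zero_mem_normS (z : Fin m) (hz : (z : ℕ) = 0) (S : Finset (Fin m)) : z ∈ normS S := by
  unfold normS
  split_ifs with h
  · obtain ⟨y, hy, hy0⟩ := h
    rwa [show z = y from Fin.ext (hz.trans hy0.symm)]
  · rw [Finset.mem_compl]
    exact fun h' => h ⟨z, h', hz⟩

lemma normS_unique {S S' : Finset (Fin m)} (h0 : ∃ i ∈ S', (i : ℕ) = 0)
    (h : ∀ a b, (a ∈ S' ↔ b ∈ S') ↔ (a ∈ S ↔ b ∈ S)) : S' = normS S := by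
  obtain ⟨z, hz, hz0⟩ := h0
  have hz' := zero_mem_normS z hz0 S
  ext a
  have h1 := (h a z).trans (mem_normS_iff S a z).symm
  tauto

lemma ds_compat_B (hi : i ∈ S) (hj : j ∉ S) {S' : Finset (Fin m)}
    (hS' : (∃ i ∈ S', (i : ℕ) = 0) ∧ S' ≠ Finset.univ) {F : Finset (Sym2 (Fin m))} :
    IsCompatibleForest (dsG i j S) id (partB S') F ↔
      ∃ c ∈ univ.erase j, F = (dsE i j S).erase (eg i j S c) ∧ S' = normS (desc i S c) := by
  rw [compat_iff (partB_ne_none _), dsG_edgeFinset hi hj]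
  simp only [partB_eq_iff, id]
  have conn : ∀ c, c ≠ j → ∀ a b, FR ((dsE i j S).erase (eg i j S c)) a b ↔
      (a ∈ desc i S c ↔ b ∈ desc i S c) := by
    intro c hc a b
    refine ⟨FR_desc hi hj (Finset.erase_subset _ _) hc (by simp), fun h => ?_⟩
    by_cases ha : a ∈ desc i S c
    · exact (FR_of_mem_desc hi hj hc ha).trans (FR_of_mem_desc hi hj hc (h.1 ha)).symm
    · exact (FR_of_notMem_desc hi hj hc ha).trans
        (FR_of_notMem_desc hi hj hc (fun h' => ha (h.2 h'))).symm
  constructor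
  · rintro ⟨h1, h2, h3, h4⟩
    have hex : ∃ c, c ≠ j ∧ ¬ (c ∈ S' ↔ par i j S c ∈ S') := by
      by_contra hcon
      push Not at hcon
      have hij : i ≠ j := by rintro rfl; exact hj hi
      have hij' : i ∈ S' ↔ j ∈ S' := by simpa [par] using hcon i hij
      have hall : ∀ a, a ∈ S' ↔ j ∈ S' := by
        intro a
        by_cases ha : a = j
        · rw [ha]
        · have := hcon a ha
          unfold par at this
          split_ifs at this
          · exact this
          · exact this.trans hij'
          · exact this
      obtain ⟨z, hz, _⟩ := hS'.1
      exact hS'.2 (Finset.eq_univ_iff_forall.2 fun a => (hall a).2 ((hall z).1 hz))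
    obtain ⟨c, hc, hcS⟩ := hex
    have hcF : eg i j S c ∉ F := fun h => hcS ((h3 _ _).1 (FR.edge h))
    have hFeq : F = (dsE i j S).erase (eg i j S c) := by
      apply Finset.Subset.antisymm
      · intro e he
        exact Finset.mem_erase.2 ⟨fun h => hcF (h ▸ he), h1 he⟩
      · intro e he
        rw [Finset.mem_erase] at he
        by_contra heF
        obtain ⟨d, hd, rfl⟩ := mem_dsE.1 he.2
        have hdc : d ≠ c := by rintro rfl; exact he.1 rfl
        have cut1 := fun a b => FR_desc hi hj h1 hc hcF (a := a) (b := b)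
        have cut2 := fun a b => FR_desc hi hj h1 hd heF (a := a) (b := b)
        have n1 : ¬ FR F c j := fun h =>
          j_notMem_desc hj hc ((cut1 _ _ h).1 (self_mem_desc hi c))
        have n2 : ¬ FR F d j := fun h =>
          j_notMem_desc hj hd ((cut2 _ _ h).1 (self_mem_desc hi d))
        have n3 : ¬ FR F c d := by
          intro h
          by_cases hci : c = i
          · have hdi : d ≠ i := fun h' => hdc (h'.trans hci.symm)
            have := (cut2 _ _ h).2 (self_mem_desc hi d)
            simp [desc, hdi] at this
            exact hdc this.symm
          · have := (cut1 _ _ h).1 (self_mem_desc hi c)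
            simp [desc, hci] at this
            exact hdc this
        rw [h3] at n1 n2 n3
        tauto
    refine ⟨c, by simp [hc], hFeq, ?_⟩
    subst hFeq
    refine normS_unique hS'.1 fun a b => ?_
    rw [← h3, conn c hc]
  · rintro ⟨c, hc, rfl, hS⟩
    have hcj : c ≠ j := by simpa using hc
    refine ⟨Finset.erase_subset _ _, (dsE_acyclic hi hj).anti (Finset.erase_subset _ _),
      fun a b => ?_, fun w => ⟨w, FR.refl _ _⟩⟩
    rw [conn c hcj, hS, mem_normS_iff]

lemma sum_powerset_exists {α ι : Type*} [DecidableEq α] (E : Finset α) (I : Finset ι)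
    (Fd : ι → Finset α) (Q : ι → Prop) (g : Finset α → ℚ)
    (P : Finset α → Prop) [DecidablePred P] [DecidablePred Q]
    (hP : ∀ F, P F ↔ ∃ d ∈ I, F = Fd d ∧ Q d)
    (hinj : ∀ a ∈ I, ∀ b ∈ I, Fd a = Fd b → a = b) (hsub : ∀ a ∈ I, Fd a ⊆ E) :
    (∑ F ∈ E.powerset, if P F then g F else 0) =
      ∑ d ∈ I, if Q d then g (Fd d) else 0 := by
  rw [← Finset.sum_filter, ← Finset.sum_filter]
  symm
  refine Finset.sum_bij (fun d _ => Fd d) ?_ ?_ ?_ ?_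
  · intro d hd
    rw [Finset.mem_filter] at hd ⊢
    exact ⟨Finset.mem_powerset.2 (hsub d hd.1), (hP _).2 ⟨d, hd.1, rfl, hd.2⟩⟩
  · intro a ha b hb h
    exact hinj a (Finset.mem_filter.1 ha).1 b (Finset.mem_filter.1 hb).1 h
  · intro F hF
    obtain ⟨d, hd, rfl, hq⟩ := (hP F).1 (Finset.mem_filter.1 hF).2
    exact ⟨d, Finset.mem_filter.2 ⟨hd, hq⟩, rfl⟩
  · intro _ _
    rfl

/-- Total extension of `α` to pairs of finsets. -/
noncomputable def extA (α : AIdx m × BIdx m → ℚ) (s S : Finset (Fin m)) : ℚ :=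
  if h : s.card = 2 ∧ ((∃ i ∈ normS S, (i : ℕ) = 0) ∧ normS S ≠ Finset.univ) then
    α (⟨s, h.1⟩, ⟨normS S, h.2⟩) else 0

lemma extA_eq (α : AIdx m × BIdx m → ℚ) (s : AIdx m) (T : BIdx m) (S : Finset (Fin m))
    (h : T.1 = normS S) : extA α s.1 S = α (s, T) := by
  have hc : s.1.card = 2 ∧ ((∃ i ∈ normS S, (i : ℕ) = 0) ∧ normS S ≠ Finset.univ) :=
    ⟨s.2, h ▸ T.2⟩
  unfold extA
  rw [dif_pos hc]
  congr 2
  exact Subtype.ext h.symm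

lemma normS_ne_univ {S : Finset (Fin m)} (h1 : S.Nonempty) (h2 : S ≠ univ) :
    normS S ≠ univ := by
  unfold normS
  split_ifs
  · exact h2
  · intro h
    rw [Finset.compl_eq_univ_iff] at h
    exact h1.ne_empty h

lemma ds_relation (hi : i ∈ S) (hj : j ∉ S) {α : AIdx m × BIdx m → ℚ} (hα : MemX m α)
    (z : Fin m → ℚ) :
    ∑ c ∈ univ.erase j, ∑ d ∈ univ.erase j, extA α {c, par i j S c} (desc i S d) *
      ((∏ c' ∈ (univ.erase j).erase c, z c') * z d) = 0 := by
  have hm : 0 < m := lt_of_le_of_lt (Nat.zero_le _) j.2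
  have heinj : ∀ a ∈ univ.erase j, ∀ b ∈ univ.erase j, eg i j S a = eg i j S b → a = b := by
    intro a ha b hb h
    exact eg_inj hi hj (by simpa using ha) (by simpa using hb) h
  obtain ⟨x, hx⟩ : ∃ x : Sym2 (Fin m) → ℚ, ∀ c ∈ univ.erase j, x (eg i j S c) = z c := by
    refine ⟨fun e => if h : ∃ c ∈ univ.erase j, eg i j S c = e then z h.choose else 0, ?_⟩
    intro c hc
    have h : ∃ c' ∈ univ.erase j, eg i j S c' = eg i j S c := ⟨c, hc, rfl⟩
    simp only
    rw [dif_pos h]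
    congr 1
    exact heinj _ h.choose_spec.1 _ hc h.choose_spec.2
  have hA' : ∀ s : Finset (Fin m), s.card = 2 → forestPoly (dsG i j S) x id (partA s) =
      ∑ c ∈ univ.erase j, if s = {c, par i j S c} then
        ∏ c' ∈ (univ.erase j).erase c, z c' else 0 := by
    intro s hs
    rw [forestPoly_eq, dsG_edgeFinset hi hj]
    refine ((sum_powerset_exists (dsE i j S) (univ.erase j) (fun c => {eg i j S c})
      (fun c => s = {c, par i j S c}) (fun F => ∏ e ∈ dsE i j S \ F, x e) _
      (fun F => ds_compat_A hi hj hs) ?_ ?_).trans ?_)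
    rotate_left 2
    · refine Finset.sum_congr rfl fun c hc => ?_
      refine if_congr Iff.rfl ?_ rfl
      have : dsE i j S \ {eg i j S c} = ((univ.erase j).erase c).image (eg i j S) := by
        ext e
        simp only [Finset.mem_sdiff, Finset.mem_singleton, Finset.mem_image, dsE]
        constructor
        · rintro ⟨⟨d, hd, rfl⟩, hne⟩
          exact ⟨d, Finset.mem_erase.2 ⟨fun h => hne (h ▸ rfl), hd⟩, rfl⟩
        · rintro ⟨d, hd, rfl⟩
          rw [Finset.mem_erase] at hd
          exact ⟨⟨d, hd.2, rfl⟩, fun h => hd.1 (heinj _ hd.2 _ hc h)⟩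
      rw [this, Finset.prod_image]
      · exact Finset.prod_congr rfl fun d hd => hx d (Finset.mem_of_mem_erase hd)
      · intro a ha b hb h
        exact heinj a (Finset.mem_of_mem_erase ha) b (Finset.mem_of_mem_erase hb) h
    · intro a ha b hb h
      exact heinj a ha b hb (Finset.singleton_injective h)
    · intro a ha
      exact Finset.singleton_subset_iff.2 (eg_mem (by simpa using ha))
  have hB' : ∀ T : Finset (Fin m), ((∃ i ∈ T, (i : ℕ) = 0) ∧ T ≠ Finset.univ) →
      forestPoly (dsG i j S) x id (partB T) =
      ∑ d ∈ univ.erase j, if T = normS (desc i S d) then z d else 0 := by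
    intro T hT
    rw [forestPoly_eq, dsG_edgeFinset hi hj]
    refine ((sum_powerset_exists (dsE i j S) (univ.erase j)
      (fun c => (dsE i j S).erase (eg i j S c))
      (fun c => T = normS (desc i S c)) (fun F => ∏ e ∈ dsE i j S \ F, x e) _
      (fun F => ds_compat_B hi hj hT) ?_ ?_).trans ?_)
    rotate_left 2
    · refine Finset.sum_congr rfl fun c hc => ?_
      refine if_congr Iff.rfl ?_ rfl
      have hcE : eg i j S c ∈ dsE i j S := eg_mem (by simpa using hc)
      have : dsE i j S \ (dsE i j S).erase (eg i j S c) = {eg i j S c} := by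
        ext e
        simp only [Finset.mem_sdiff, Finset.mem_erase, Finset.mem_singleton]
        constructor
        · tauto
        · rintro rfl; tauto
      rw [this, Finset.prod_singleton, hx c hc]
    · intro a ha b hb h
      by_contra hne
      have : eg i j S a ∈ (dsE i j S).erase (eg i j S b) :=
        Finset.mem_erase.2 ⟨fun h' => hne (heinj a ha b hb h'), eg_mem (by simpa using ha)⟩
      rw [← h] at this
      simp at this
    · intro a ha
      exact Finset.erase_subset _ _
  have hA : ∀ s : AIdx m, forestPoly (dsG i j S) x id (partA s.1) =
      ∑ c ∈ univ.erase j, if s.1 = {c, par i j S c} then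
        ∏ c' ∈ (univ.erase j).erase c, z c' else 0 := fun s => hA' s.1 s.2
  have hB : ∀ T : BIdx m, forestPoly (dsG i j S) x id (partB T.1) =
      ∑ d ∈ univ.erase j, if T.1 = normS (desc i S d) then z d else 0 := fun T => hB' T.1 T.2
  have h0 := hα (Fin m) (dsG i j S) x id Function.injective_id
  simp only [hA, hB] at h0
  rw [Fintype.sum_prod_type] at h0
  rw [← h0]
  symm
  have e1 : ∀ (s : AIdx m) (T : BIdx m), α (s, T) *
      ((∑ c ∈ univ.erase j, if s.1 = {c, par i j S c} then
        ∏ c' ∈ (univ.erase j).erase c, z c' else 0) *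
        ∑ d ∈ univ.erase j, if T.1 = normS (desc i S d) then z d else 0) =
      ∑ c ∈ univ.erase j, ∑ d ∈ univ.erase j,
        if s.1 = {c, par i j S c} then (if T.1 = normS (desc i S d) then
          extA α {c, par i j S c} (desc i S d) *
            ((∏ c' ∈ (univ.erase j).erase c, z c') * z d) else 0) else 0 := by
    intro s T
    rw [Finset.sum_mul_sum, Finset.mul_sum]
    refine Finset.sum_congr rfl fun c _ => ?_
    rw [Finset.mul_sum]
    refine Finset.sum_congr rfl fun d _ => ?_
    split_ifs with h1 h2
    · rw [← h1, extA_eq α s T _ h2]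
    · ring
    · ring
    · ring
  simp only [e1]
  have e2 : ∀ s : AIdx m, ∑ T : BIdx m, ∑ c ∈ univ.erase j, ∑ d ∈ univ.erase j,
        (if s.1 = {c, par i j S c} then (if T.1 = normS (desc i S d) then
          extA α {c, par i j S c} (desc i S d) *
            ((∏ c' ∈ (univ.erase j).erase c, z c') * z d) else 0) else 0) =
      ∑ c ∈ univ.erase j, if s.1 = {c, par i j S c} then ∑ d ∈ univ.erase j,
        extA α {c, par i j S c} (desc i S d) *
            ((∏ c' ∈ (univ.erase j).erase c, z c') * z d) else 0 := by
    intro s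
    rw [Finset.sum_comm]
    refine Finset.sum_congr rfl fun c _ => ?_
    rw [Finset.sum_comm]
    split_ifs with h1
    · refine Finset.sum_congr rfl fun d hd => ?_
      have hdj : d ≠ j := by simpa using hd
      have hT : (∃ k ∈ normS (desc i S d), (k : ℕ) = 0) ∧ normS (desc i S d) ≠ Finset.univ := by
        refine ⟨⟨⟨0, hm⟩, zero_mem_normS _ rfl _, rfl⟩, normS_ne_univ ⟨d, self_mem_desc hi d⟩ ?_⟩
        intro h
        exact j_notMem_desc hj hdj (h ▸ Finset.mem_univ j)
      refine (Finset.sum_eq_single (⟨normS (desc i S d), hT⟩ : BIdx m) ?_ ?_).trans ?_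
      rotate_left 2
      · exact if_pos rfl
      · intro T _ hne
        rw [if_neg]
        exact fun h => hne (Subtype.ext h)
      · intro h
        exact absurd (Finset.mem_univ _) h
    · simp
  simp only [e2]
  rw [Finset.sum_comm]
  refine Finset.sum_congr rfl fun c hc => ?_
  have hcj : c ≠ j := by simpa using hc
  rw [Finset.sum_eq_single (mkA c (par i j S c) (par_ne hi hj hcj).symm)]
  · exact if_pos (mkA_val _ _ _)
  · intro s _ hne
    rw [if_neg]
    exact fun h => hne (Subtype.ext h)
  · intro h
    exact absurd (Finset.mem_univ _) h

end DoubleStar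

set_option linter.unusedSectionVars false
set_option linter.unusedVariables false

section Final
open scoped Classical
variable {m : ℕ}

lemma normS_compl (hm : 0 < m) (S : Finset (Fin m)) : normS Sᶜ = normS S := by
  refine normS_unique ⟨⟨0, hm⟩, zero_mem_normS _ rfl _, rfl⟩ fun a b => ?_
  rw [mem_normS_iff, Finset.mem_compl, Finset.mem_compl]
  tauto

lemma extA_compl (hm : 0 < m) (α : AIdx m × BIdx m → ℚ) (s S : Finset (Fin m)) :
    extA α s Sᶜ = extA α s S := by
  unfold extA
  simp only [normS_compl hm]

variable {α : AIdx m × BIdx m → ℚ}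

lemma ds_coeffs (hα : MemX m α) {i j : Fin m} {S : Finset (Fin m)} (hi : i ∈ S) (hj : j ∉ S) :
    (∀ c ∈ univ.erase j, ∀ d ∈ univ.erase j, c ≠ d →
      extA α {c, par i j S c} (desc i S d) = 0) ∧
    ∑ c ∈ univ.erase j, extA α {c, par i j S c} (desc i S c) = 0 :=
  extract_coeffs (univ.erase j) (fun c d => extA α {c, par i j S c} (desc i S d))
    (fun z => ds_relation hi hj hα z)

lemma extA_nonsep (hα : MemX m α) {k l j : Fin m} {S : Finset (Fin m)} (hkl : l ≠ k)
    (hk : k ∈ S) (hl : l ∈ S) (hj : j ∉ S) : extA α {l, k} S = 0 := by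
  have h := (ds_coeffs hα hk hj).1 l
    (Finset.mem_erase.2 ⟨by rintro rfl; exact hj hl, Finset.mem_univ _⟩) k
    (Finset.mem_erase.2 ⟨by rintro rfl; exact hj hk, Finset.mem_univ _⟩) hkl
  simpa [par, desc, hkl, hl] using h

/-- The coefficients read off from `α`. -/
noncomputable def lam (α : AIdx m × BIdx m → ℚ) (p r : Fin m) : ℚ :=
  if r = p then 0 else extA α {r, p} {r}

lemma lam_row (hm : 2 ≤ m) (hα : MemX m α) (p : Fin m) : ∑ r, lam α p r = 0 := by
  have : Nontrivial (Fin m) := Fin.nontrivial_iff_two_le.2 hm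
  obtain ⟨i, hi⟩ := exists_ne p
  have h := (ds_coeffs hα (Finset.mem_singleton_self i)
    (fun h => hi (Finset.mem_singleton.1 h).symm : p ∉ ({i} : Finset (Fin m)))).2
  rw [← Finset.add_sum_erase _ _ (Finset.mem_univ p), ← h]
  rw [show lam α p p = 0 from if_pos rfl, zero_add]
  refine Finset.sum_congr rfl fun c hc => ?_
  have hcp : c ≠ p := (Finset.mem_erase.1 hc).1
  unfold lam
  rw [if_neg hcp]
  by_cases hci : c = i
  · subst hci; simp [par, desc]
  · simp [par, desc, hci]

lemma extA_sep (hm : 2 ≤ m) (hα : MemX m α) {i j : Fin m} {S : Finset (Fin m)} (hi : i ∈ S)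
    (hj : j ∉ S) :
    extA α {i, j} S = ∑ c, if c ∈ S then lam α j c else lam α i c := by
  have hij : i ≠ j := by rintro rfl; exact hj hi
  have h := (ds_coeffs hα hi hj).2
  have e : ∑ c ∈ univ.erase j, extA α {c, par i j S c} (desc i S c) =
      extA α {i, j} S + ∑ c, if c ∈ S then lam α i c else lam α j c := by
    rw [← Finset.add_sum_erase _ _ (Finset.mem_erase.2 ⟨hij, Finset.mem_univ i⟩)]
    congr 1
    · simp [par, desc]
    · rw [← Finset.add_sum_erase _ (fun c => if c ∈ S then lam α i c else lam α j c)
        (Finset.mem_univ j), ← Finset.add_sum_erase (univ.erase j)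
        (fun c => if c ∈ S then lam α i c else lam α j c)
        (Finset.mem_erase.2 ⟨hij, Finset.mem_univ i⟩)]
      rw [if_neg hj, if_pos hi, show lam α i i = 0 from if_pos rfl,
        show lam α j j = 0 from if_pos rfl, zero_add, zero_add]
      refine Finset.sum_congr rfl fun c hc => ?_
      have hci : c ≠ i := (Finset.mem_erase.1 hc).1
      have hcj : c ≠ j := (Finset.mem_erase.1 (Finset.mem_erase.1 hc).2).1
      unfold lam
      by_cases hcS : c ∈ S <;> simp [par, desc, hci, hcj, hcS]
  rw [e] at h
  have h2 : (∑ c, if c ∈ S then lam α i c else lam α j c) +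
      (∑ c, if c ∈ S then lam α j c else lam α i c) = 0 := by
    rw [← Finset.sum_add_distrib]
    have : ∑ c, (lam α i c + lam α j c) = 0 := by
      rw [Finset.sum_add_distrib, lam_row hm hα, lam_row hm hα, add_zero]
    rw [← this]
    refine Finset.sum_congr rfl fun c _ => ?_
    split_ifs <;> ring
  linarith

lemma ecoef_pair {i j : Fin m} (hij : i ≠ j) (p r : Fin m) (s : AIdx m) (T : BIdx m)
    (hs : s.1 = {i, j}) :
    ecoef p r (s, T) = (if p = i ∧ SepJ j i r T.1 then 1 else 0) +
      (if p = j ∧ SepJ i j r T.1 then 1 else 0) := by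
  unfold ecoef
  simp only
  rw [hs]
  by_cases h1 : p = i
  · subst h1
    simp [hij, hij.symm]
  · by_cases h2 : p = j
    · subst h2
      simp [hij, hij.symm]
    · simp [h1, h2]

lemma eq_sum_ecoef (hm : 2 ≤ m) (hα : MemX m α) :
    α = ∑ p, ∑ r, lam α p r • ecoef p r := by
  funext ⟨s, T⟩
  simp only [Finset.sum_apply, Pi.smul_apply, smul_eq_mul]
  have hcomp : ∀ i j : Fin m, i ≠ j → s.1 = {i, j} →
      ∑ p, ∑ r, lam α p r * ecoef p r (s, T) =
      (∑ r, if SepJ j i r T.1 then lam α i r else 0) +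
        ∑ r, if SepJ i j r T.1 then lam α j r else 0 := by
    intro i j hij hs
    simp only [ecoef_pair hij _ _ s T hs, mul_add, Finset.sum_add_distrib, mul_ite, mul_one,
      mul_zero, ite_and]
    congr 1
    · rw [Finset.sum_comm]
      refine Finset.sum_congr rfl fun r _ => ?_
      rw [Finset.sum_ite_eq' univ i]
      simp
    · rw [Finset.sum_comm]
      refine Finset.sum_congr rfl fun r _ => ?_
      rw [Finset.sum_ite_eq' univ j]
      simp
  have hTn : T.1 = normS T.1 := normS_unique T.2.1 fun a b => Iff.rfl
  have hext := extA_eq α s T T.1 hTn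
  have hsep : ∀ i j : Fin m, i ≠ j → s.1 = {i, j} → i ∈ T.1 → j ∉ T.1 →
      α (s, T) = ∑ p, ∑ r, lam α p r * ecoef p r (s, T) := by
    intro i j hij hs hi hj
    rw [hcomp i j hij hs, ← hext, hs, extA_sep hm hα hi hj, ← Finset.sum_add_distrib]
    refine Finset.sum_congr rfl fun c _ => ?_
    by_cases hc : c ∈ T.1 <;> simp [SepJ, hi, hj, hc]
  obtain ⟨i, j, hij, hs⟩ := Finset.card_eq_two.1 s.2
  by_cases hi : i ∈ T.1
  · by_cases hj : j ∈ T.1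
    · obtain ⟨z, hz⟩ : ∃ z, z ∉ T.1 := by
        by_contra hcon
        push Not at hcon
        exact T.2.2 (Finset.eq_univ_iff_forall.2 hcon)
      rw [hcomp i j hij hs, ← hext, hs, extA_nonsep hα hij hj hi hz]
      simp [SepJ, hi, hj]
    · exact hsep i j hij hs hi hj
  · by_cases hj : j ∈ T.1
    · exact hsep j i hij.symm (hs.trans (Finset.pair_comm _ _)) hj hi
    · obtain ⟨z, hz, _⟩ := T.2.1
      rw [hcomp i j hij hs, ← hext, hs, ← extA_compl (by omega),
        extA_nonsep hα hij (Finset.mem_compl.2 hj) (Finset.mem_compl.2 hi)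
        (fun h => (Finset.mem_compl.1 h) hz)]
      simp [SepJ, hi, hj]

lemma SepJ_normS (i j c : Fin m) (S : Finset (Fin m)) :
    SepJ i j c (normS S) ↔ SepJ i j c S := by
  have h1 := mem_normS_iff S i j
  have h2 := mem_normS_iff S c j
  have key : ∀ a b c d : Prop, ((a ↔ b) ↔ (c ↔ d)) → ((a ↔ ¬ b) ↔ (c ↔ ¬ d)) := by
    intro a b c d
    by_cases a <;> by_cases b <;> by_cases c <;> by_cases d <;> simp_all
  exact and_congr (key _ _ _ _ h1) (key _ _ _ _ h2)

/-- Test points for linear independence. -/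
lemma exists_test (hm : 2 ≤ m) {p r : Fin m} (hpr : r ≠ p) :
    ∃ q : AIdx m × BIdx m, ∀ j c : Fin m, ecoef j c q =
      (if j = r ∧ c ≠ r then 1 else 0) + (if j = p ∧ c = r then 1 else 0) := by
  have hT : (∃ k ∈ normS ({r} : Finset (Fin m)), (k : ℕ) = 0) ∧
      normS ({r} : Finset (Fin m)) ≠ Finset.univ := by
    refine ⟨⟨⟨0, by omega⟩, zero_mem_normS _ rfl _, rfl⟩,
      normS_ne_univ (Finset.singleton_nonempty r) ?_⟩
    intro h
    have := h ▸ Finset.mem_univ p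
    exact hpr (Finset.mem_singleton.1 this).symm
  refine ⟨(mkA r p hpr, ⟨normS {r}, hT⟩), fun j c => ?_⟩
  refine (ecoef_pair hpr j c _ _ (mkA_val _ _ _)).trans ?_
  have e1 : SepJ p r c (normS {r}) ↔ c ≠ r := by
    rw [SepJ_normS]; simp [SepJ, hpr.symm]
  have e2 : SepJ r p c (normS {r}) ↔ c = r := by
    rw [SepJ_normS]; simp [SepJ, hpr.symm]
  exact congrArg₂ (· + ·) (if_congr (and_congr_right fun _ => e1) rfl rfl)
    (if_congr (and_congr_right fun _ => e2) rfl rfl)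

/-- Index type of the basis. -/
abbrev BI (c0 : Fin m → Fin m) := Σ p : Fin m, {r : Fin m // r ≠ p ∧ r ≠ c0 p}

/-- The basis. -/
noncomputable def bF (c0 : Fin m → Fin m) (a : BI c0) : AIdx m × BIdx m → ℚ :=
  ecoef a.1 a.2.1 - ecoef a.1 (c0 a.1)

lemma card_BI (c0 : Fin m → Fin m) (h : ∀ p, c0 p ≠ p) :
    Fintype.card (BI c0) = m * (m - 2) := by
  rw [Fintype.card_sigma]
  have : ∀ p : Fin m, Fintype.card {r : Fin m // r ≠ p ∧ r ≠ c0 p} = m - 2 := by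
    intro p
    rw [Fintype.card_subtype]
    have : (Finset.univ.filter fun r : Fin m => r ≠ p ∧ r ≠ c0 p) = ({p, c0 p} : Finset (Fin m))ᶜ := by
      ext r; simp
    rw [this, Finset.card_compl, Finset.card_pair (h p).symm, Fintype.card_fin]
  simp only [this]
  simp

lemma bF_indep (hm : 2 ≤ m) (c0 : Fin m → Fin m) (h : ∀ p, c0 p ≠ p) :
    LinearIndependent ℚ (bF c0) := by
  rw [Fintype.linearIndependent_iff]
  rintro g hg ⟨p, r, hrp, hrc⟩
  obtain ⟨q, hq⟩ := exists_test hm hrp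
  have h1 := congrFun hg q
  simp only [Finset.sum_apply, Pi.smul_apply, smul_eq_mul, Pi.zero_apply] at h1
  rw [Finset.sum_eq_single (⟨p, r, hrp, hrc⟩ : BI c0)] at h1
  · have : bF c0 ⟨p, r, hrp, hrc⟩ q = 1 := by
      simp [bF, hq, hrp.symm, hrc.symm]
    rwa [this, mul_one] at h1
  · rintro ⟨j, k, hkj, hkc⟩ _ hne
    have : bF c0 ⟨j, k, hkj, hkc⟩ q = 0 := by
      simp only [bF, Pi.sub_apply, hq]
      by_cases hjr : j = r
      · subst hjr
        simp [hrp, hkj, h]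
      · by_cases hjp : j = p
        · subst hjp
          have hkr : k ≠ r := by rintro rfl; exact hne rfl
          simp [hjr, hkr, hrc.symm]
        · simp [hjr, hjp]
    rw [this, mul_zero]
  · intro h'
    exact absurd (Finset.mem_univ _) h'

lemma bF_memX (hm : 0 < m) (c0 : Fin m → Fin m) (h : ∀ p, c0 p ≠ p) (a : BI c0) :
    MemX m (bF c0 a) := by
  intro V _ _ G _ x v hv
  have e1 := ecoef_identity (G := G) x hm hv a.2.2.1.symm
  have e2 := ecoef_identity (G := G) x hm hv (h a.1).symm
  simp only [bF, Pi.sub_apply, sub_mul, Finset.sum_sub_distrib]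
  rw [← e1, ← e2, sub_self]

lemma memX_iff (hm : 2 ≤ m) (c0 : Fin m → Fin m) (h : ∀ p, c0 p ≠ p)
    (α : AIdx m × BIdx m → ℚ) :
    MemX m α ↔ α ∈ Submodule.span ℚ (Set.range (bF c0)) := by
  constructor
  · intro hα
    have e : α = ∑ p, ∑ r, lam α p r • (ecoef p r - ecoef p (c0 p)) := by
      conv_lhs => rw [eq_sum_ecoef hm hα]
      refine Finset.sum_congr rfl fun p _ => ?_
      simp only [smul_sub, Finset.sum_sub_distrib]
      rw [← Finset.sum_smul, lam_row hm hα, zero_smul, sub_zero]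
    rw [e]
    refine Submodule.sum_mem _ fun p _ => Submodule.sum_mem _ fun r _ => ?_
    by_cases h1 : r = p
    · rw [show lam α p r = 0 from if_pos h1, zero_smul]
      exact Submodule.zero_mem _
    · by_cases h2 : r = c0 p
      · rw [h2, sub_self, smul_zero]
        exact Submodule.zero_mem _
      · exact Submodule.smul_mem _ _ (Submodule.subset_span ⟨⟨p, r, h1, h2⟩, rfl⟩)
  · intro hα
    induction hα using Submodule.span_induction with
    | mem y hy =>
      obtain ⟨a, rfl⟩ := hy
      exact bF_memX (by omega) c0 h a
    | zero =>
      intro V _ _ G _ x v hv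
      simp
    | add y z _ _ hy hz =>
      intro V _ _ G _ x v hv
      have e1 := hy V G x v hv
      have e2 := hz V G x v hv
      simp only [Pi.add_apply, add_mul, Finset.sum_add_distrib]
      rw [e1, e2, add_zero]
    | smul t y _ hy =>
      intro V _ _ G _ x v hv
      have e1 := hy V G x v hv
      simp only [Pi.smul_apply, smul_eq_mul, mul_assoc]
      rw [← Finset.mul_sum, e1, mul_zero]

end Final

/-- **The Vlasev–Yeats conjecture** (main theorem of the paper).  For every `m ≥ 3` the
space `X_m` of vanishing quadratic combinations of `A`- and `B`-spanning-forest
polynomials has dimension exactly `m(m−2)` (it has a linearly independent spanning set of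
that size), and there is at least one identity
`Φ_{(1,…,1)} Φ_{(1,2,…,m)} = Σ α_{ij} A_iB_j` valid on all graphs; hence the most
general such identity has `m(m−2)` free parameters. -/
theorem vlasev_yeats_conjecture (m : ℕ) (hm : 3 ≤ m) :
    (∃ f : Fin (m * (m - 2)) → (AIdx m × BIdx m → ℚ),
      LinearIndependent ℚ f ∧
        ∀ α : AIdx m × BIdx m → ℚ,
          MemX m α ↔ α ∈ Submodule.span ℚ (Set.range f)) ∧
    (∃ β : AIdx m × BIdx m → ℚ,
      ∀ (V : Type) [Fintype V] [DecidableEq V] (G : SimpleGraph V) [DecidableRel G.Adj]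
        (x : Sym2 V → ℚ) (v : Fin m → V), Function.Injective v →
        forestPoly G x v (fun _ => some 0) * forestPoly G x v (fun i => some (i : ℕ)) =
          ∑ q : AIdx m × BIdx m, β q *
            (forestPoly G x v (partA q.1.val) * forestPoly G x v (partB q.2.val))) := by
  obtain ⟨z, o, hzo⟩ : ∃ z o : Fin m, z ≠ o :=
    ⟨⟨0, by omega⟩, ⟨1, by omega⟩, by simp⟩
  refine ⟨?_, ecoef z o, ?_⟩
  · let c0 : Fin m → Fin m := fun p => if p = z then o else z
    have h0 : ∀ p, c0 p ≠ p := by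
      intro p
      by_cases hp : p = z
      · simp only [c0, if_pos hp]
        rw [hp]
        exact hzo.symm
      · simp only [c0, if_neg hp]
        exact fun h => hp h.symm
    let e : Fin (m * (m - 2)) ≃ BI c0 :=
      (finCongr (card_BI c0 h0).symm).trans (Fintype.equivFin (BI c0)).symm
    refine ⟨bF c0 ∘ e, ?_, fun α => ?_⟩
    · exact (linearIndependent_equiv e).2 (bF_indep (by omega) c0 h0)
    · rw [e.surjective.range_comp]
      exact memX_iff (by omega) c0 h0 α
  · intro V _ _ G _ x v hv
    exact ecoef_identity (G := G) x (by omega) hv hzo
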